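/- arXiv:0704.1696 — 4 statements merged into one kernel-verified Lean document; each statement's English description precedes it below -/
import Mathlib

section
/- Let n ≥ 2, let Λ : ℕ → [0,1] be nonincreasing with Λ(0) = 1 and satisfying hypothesis H_Λ, and let μ be a probability measure on [0,1] satisfying hypothesis H_μ. Let m★ be the unique zero in F_n^+ of the mean field h, and for each ε ∈ (0,1) let ν^ε be an invariant probability measure of the SOM transition kernel P_ε with ν^ε(F_n^+) = 1. Then ν^ε converges weakly to the Dirac measure δ_{m★} as ε → 0. -/
open MeasureTheory Set Filter Topology
open scoped Classical ENNReal

noncomputable section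

/-- The winning unit: the smallest index `i` minimizing `|x - m i|`. -/
def winner {n : ℕ} [NeZero n] (m : Fin n → ℝ) (x : ℝ) : Fin n :=
  (Finset.univ.filter fun i : Fin n => ∀ j, |x - m i| ≤ |x - m j|).min'
    (by
      obtain ⟨i, -, hi⟩ := Finset.exists_min_image (Finset.univ : Finset (Fin n))
        (fun i => |x - m i|) ⟨0, Finset.mem_univ _⟩
      exact ⟨i, Finset.mem_filter.mpr ⟨Finset.mem_univ _,
        fun j => hi j (Finset.mem_univ _)⟩⟩)

/-- One step of the one-dimensional SOM algorithm. -/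
def somUpdate {n : ℕ} [NeZero n] (Λ : ℕ → ℝ) (ε : ℝ) (m : Fin n → ℝ) (x : ℝ) :
    Fin n → ℝ :=
  fun i => m i - ε * Λ (Nat.dist i.1 (winner m x).1) * (m i - x)

/-- `F_n^+` : increasingly ordered states with values in `(0,1)`. -/
def Fplus (n : ℕ) : Set (Fin n → ℝ) :=
  {m | StrictMono m ∧ ∀ i, m i ∈ Set.Ioo (0 : ℝ) 1}

/-- `ν` is an invariant measure for the SOM transition kernel. -/
def IsSOMInvariant {n : ℕ} [NeZero n] (μ : Measure ℝ) (Λ : ℕ → ℝ) (ε : ℝ)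
    (ν : Measure (Fin n → ℝ)) : Prop :=
  ν.bind (fun m => μ.map fun x => somUpdate Λ ε m x) = ν

/-- The Voronoi boundary points `x_0 = 0`, `x_j = (m_j + m_{j+1})/2`, `x_n = 1`. -/
def somBnd {n : ℕ} (m : Fin n → ℝ) (j : ℕ) : ℝ :=
  if j = 0 then 0
  else if h : j < n then
    (m ⟨j - 1, lt_of_le_of_lt (Nat.sub_le j 1) h⟩ + m ⟨j, h⟩) / 2
  else 1

/-- The mean field of the one-dimensional SOM algorithm. -/
def meanField {n : ℕ} (Λ : ℕ → ℝ) (f : ℝ → ℝ) (m : Fin n → ℝ) : Fin n → ℝ :=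
  fun i => ∑ j : Fin n, Λ (Nat.dist i.1 j.1) *
    ∫ x in Set.Icc (somBnd m j.1) (somBnd m (j.1 + 1)), (m i - x) * f x

/-- Hypothesis `H_Λ`. -/
def HLambda (n : ℕ) (Λ : ℕ → ℝ) : Prop :=
  ∃ k₀ : ℕ, 2 * k₀ + 1 < n ∧ Λ (k₀ + 1) < Λ k₀

/-- Hypothesis `H_μ` on the density `f`. -/
def Hmu (f : ℝ → ℝ) : Prop :=
  (∀ x ∈ Set.Ioo (0 : ℝ) 1, 0 < f x) ∧
  (StrictConcaveOn ℝ (Set.Ioo (0 : ℝ) 1) (fun x => Real.log (f x)) ∨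
    (ConcaveOn ℝ (Set.Ioo (0 : ℝ) 1) (fun x => Real.log (f x)) ∧
      ∃ a b : ℝ, Tendsto f (nhdsWithin 0 (Set.Ioi 0)) (nhds a) ∧
        Tendsto f (nhdsWithin 1 (Set.Iio 1)) (nhds b) ∧ 0 < a + b))


structure GoodDens (f : ℝ → ℝ) : Prop where
  meas : Measurable f
  nonneg : ∀ x, 0 ≤ f x
  int : Integrable f
  pos : ∀ x ∈ Set.Ioo (0 : ℝ) 1, 0 < f x
  zero : ∀ x, x ∉ Set.Ioo (0 : ℝ) 1 → f x = 0
  four : ∀ y z t, 0 ≤ t → y ≤ z → f y * f (z + t) ≤ f (y + t) * f z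

def cnt {n : ℕ} (m : Fin n → ℝ) (x : ℝ) : ℕ :=
  ((Finset.Ico 1 n).filter (fun j => somBnd m j < x)).card

def HH {n : ℕ} (Λ : ℕ → ℝ) (f : ℝ → ℝ) (m : Fin n → ℝ) (i : Fin n) : ℝ :=
  ∫ x, Λ (Nat.dist i.1 (cnt m x)) * (m i - x) * f x

lemma bnd_eq {n : ℕ} (m : Fin n → ℝ) {j : ℕ} (h1 : 1 ≤ j) (h2 : j < n) :
    somBnd m j = (m ⟨j - 1, lt_of_le_of_lt (Nat.sub_le j 1) h2⟩ + m ⟨j, h2⟩) / 2 := by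
  unfold somBnd
  rw [if_neg (by omega), dif_pos h2]

lemma bnd_mono_m {n : ℕ} {m m' : Fin n → ℝ} (h : ∀ i, m i ≤ m' i) {j : ℕ} (h1 : 1 ≤ j)
    (h2 : j < n) : somBnd m j ≤ somBnd m' j := by
  rw [bnd_eq m h1 h2, bnd_eq m' h1 h2]
  have := h ⟨j, h2⟩
  have := h ⟨j - 1, lt_of_le_of_lt (Nat.sub_le j 1) h2⟩
  linarith

lemma bnd_le {n : ℕ} {m : Fin n → ℝ} (hm : Monotone m) {j : ℕ} (h1 : 1 ≤ j)
    (i : Fin n) (hj : j ≤ i.1) : somBnd m j ≤ m i := by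
  have h2 : j < n := lt_of_le_of_lt hj i.2
  rw [bnd_eq m h1 h2]
  have := hm (show (⟨j, h2⟩ : Fin n) ≤ i from hj)
  have := hm (show (⟨j - 1, lt_of_le_of_lt (Nat.sub_le j 1) h2⟩ : Fin n) ≤ i from
    (Nat.sub_le j 1).trans hj)
  linarith

lemma le_bnd {n : ℕ} {m : Fin n → ℝ} (hm : Monotone m) {j : ℕ} (h2 : j < n)
    (i : Fin n) (hj : i.1 < j) : m i ≤ somBnd m j := by
  rw [bnd_eq m (by omega) h2]
  have := hm (show i ≤ (⟨j, h2⟩ : Fin n) from hj.le)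
  have := hm (show i ≤ (⟨j - 1, lt_of_le_of_lt (Nat.sub_le j 1) h2⟩ : Fin n) from
    Nat.le_sub_one_of_lt hj)
  linarith

lemma bnd_mono {n : ℕ} {m : Fin n → ℝ} (hm : Monotone m) {j l : ℕ} (h1 : 1 ≤ j)
    (hjl : j ≤ l) (h2 : l < n) : somBnd m j ≤ somBnd m l := by
  rcases hjl.eq_or_lt with h | h
  · rw [h]
  · exact (bnd_le hm h1 ⟨j, hjl.trans_lt h2⟩ le_rfl).trans (le_bnd hm h2 _ h)

lemma cnt_anti {n : ℕ} {m m' : Fin n → ℝ} (h : ∀ i, m i ≤ m' i) (x : ℝ) :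
    cnt m' x ≤ cnt m x := by
  apply Finset.card_le_card
  intro j hj
  simp only [Finset.mem_filter, Finset.mem_Ico] at hj ⊢
  exact ⟨hj.1, (bnd_mono_m h hj.1.1 hj.1.2).trans_lt hj.2⟩

lemma cnt_le_of {n : ℕ} {m : Fin n → ℝ} {x : ℝ} {k : ℕ}
    (h : ∀ j, k < j → 1 ≤ j → j < n → x ≤ somBnd m j) : cnt m x ≤ k := by
  have : cnt m x ≤ (Finset.Ico 1 (k + 1)).card := by
    apply Finset.card_le_card
    intro j hj
    simp only [Finset.mem_filter, Finset.mem_Ico] at hj ⊢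
    refine ⟨hj.1.1, ?_⟩
    by_contra hc
    have := h j (by omega) hj.1.1 hj.1.2
    linarith [hj.2]
  simpa using this

lemma le_cnt_of {n : ℕ} {m : Fin n → ℝ} {x : ℝ} {k : ℕ} (hk : k < n)
    (h : ∀ j, j ≤ k → 1 ≤ j → somBnd m j < x) : k ≤ cnt m x := by
  have : (Finset.Ico 1 (k + 1)).card ≤ cnt m x := by
    apply Finset.card_le_card
    intro j hj
    simp only [Finset.mem_filter, Finset.mem_Ico] at hj ⊢
    exact ⟨⟨hj.1, by omega⟩, h j (by omega) hj.1⟩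
  simpa using this

lemma cnt_le_idx {n : ℕ} {m : Fin n → ℝ} (hm : Monotone m) {x : ℝ} {i : Fin n}
    (h : x < m i) : cnt m x ≤ i.1 :=
  cnt_le_of fun _ hj _ hjn => h.le.trans (le_bnd hm hjn i hj)

lemma idx_le_cnt {n : ℕ} {m : Fin n → ℝ} (hm : Monotone m) {x : ℝ} {i : Fin n}
    (h : m i < x) : i.1 ≤ cnt m x :=
  le_cnt_of i.2 fun _ hj h1 => (bnd_le hm h1 i hj).trans_lt h

lemma cnt_shift {n : ℕ} (m : Fin n → ℝ) (t y : ℝ) :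
    cnt (fun i => m i + t) (y + t) = cnt m y := by
  unfold cnt
  congr 1
  apply Finset.filter_congr
  intro j hj
  rw [Finset.mem_Ico] at hj
  rw [bnd_eq _ hj.1 hj.2, bnd_eq _ hj.1 hj.2]
  constructor <;> intro h <;> linarith

lemma cnt_meas {n : ℕ} (m : Fin n → ℝ) : Measurable (cnt m) := by
  have : cnt m = fun x => ∑ j ∈ Finset.Ico 1 n, if somBnd m j < x then 1 else 0 := by
    funext x
    exact Finset.card_filter _ _
  rw [this]
  refine Finset.measurable_sum _ fun j _ => ?_
  exact Measurable.ite (measurableSet_lt measurable_const measurable_id) measurable_const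
    measurable_const

lemma wt_meas {n : ℕ} (Λ : ℕ → ℝ) (m : Fin n → ℝ) (i : Fin n) :
    Measurable (fun x => Λ (Nat.dist i.1 (cnt m x))) :=
  (measurable_from_top (f := fun k => Λ (Nat.dist i.1 k))).comp (cnt_meas m)

lemma HH_int {n : ℕ} {Λ : ℕ → ℝ} (hΛ : ∀ k, Λ k ∈ Set.Icc (0 : ℝ) 1) {f : ℝ → ℝ}
    (hf : GoodDens f) (m : Fin n → ℝ) (i : Fin n) :
    Integrable (fun x => Λ (Nat.dist i.1 (cnt m x)) * (m i - x) * f x) := by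
  refine Integrable.mono' (hf.int.const_mul (|m i| + 1)) ?_ (ae_of_all _ fun x => ?_)
  · exact (((wt_meas Λ m i).mul (measurable_const.sub measurable_id)).mul
      hf.meas).aestronglyMeasurable
  · by_cases hx : x ∈ Set.Ioo (0 : ℝ) 1
    · rw [Real.norm_eq_abs, abs_mul, abs_mul, abs_of_nonneg (hf.nonneg x)]
      apply mul_le_mul_of_nonneg_right _ (hf.nonneg x)
      have h1 : |Λ (Nat.dist i.1 (cnt m x))| ≤ 1 := by
        rw [abs_of_nonneg (hΛ _).1]; exact (hΛ _).2
      have h2 : |m i - x| ≤ |m i| + 1 := by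
        refine (abs_sub _ _).trans ?_
        have : |x| ≤ 1 := abs_le.2 ⟨by linarith [hx.1], hx.2.le⟩
        linarith
      calc _ ≤ 1 * |m i - x| := mul_le_mul_of_nonneg_right h1 (abs_nonneg _)
        _ ≤ _ := by linarith
    · simp [hf.zero x hx]

lemma HH_shift {n : ℕ} (Λ : ℕ → ℝ) (f : ℝ → ℝ) (m : Fin n → ℝ) (i : Fin n) (t : ℝ) :
    HH Λ f (fun i => m i + t) i
      = ∫ y, Λ (Nat.dist i.1 (cnt m y)) * (m i - y) * f (y + t) := by
  unfold HH
  rw [← integral_add_right_eq_self _ t]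
  congr 1
  funext y
  rw [cnt_shift]
  ring_nf

lemma shift_pt {n : ℕ} {Λ : ℕ → ℝ} (hΛ : ∀ k, Λ k ∈ Set.Icc (0 : ℝ) 1) {f : ℝ → ℝ}
    (hf : GoodDens f) (m : Fin n → ℝ) (i : Fin n) {t : ℝ} (ht : 0 ≤ t) (y : ℝ) :
    f (m i + t) * (Λ (Nat.dist i.1 (cnt m y)) * (m i - y) * f y) ≤
    f (m i) * (Λ (Nat.dist i.1 (cnt m y)) * (m i - y) * f (y + t)) := by
  have hw := (hΛ (Nat.dist i.1 (cnt m y))).1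
  rcases le_total y (m i) with h | h
  · have := hf.four y (m i) t ht h
    have := mul_le_mul_of_nonneg_left this (mul_nonneg hw (sub_nonneg.2 h))
    linarith
  · have := hf.four (m i) y t ht h
    have := mul_le_mul_of_nonneg_left this (mul_nonneg hw (sub_nonneg.2 h))
    linarith

lemma shift_int {n : ℕ} {Λ : ℕ → ℝ} (hΛ : ∀ k, Λ k ∈ Set.Icc (0 : ℝ) 1) {f : ℝ → ℝ}
    (hf : GoodDens f) (m : Fin n → ℝ) (i : Fin n) (t : ℝ) :
    Integrable (fun y => Λ (Nat.dist i.1 (cnt m y)) * (m i - y) * f (y + t)) := by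
  have := (HH_int hΛ hf (fun i => m i + t) i).comp_add_right t
  refine this.congr (ae_of_all _ fun y => ?_)
  simp only [cnt_shift]
  ring_nf

lemma shift_nonneg {n : ℕ} {Λ : ℕ → ℝ} (hΛ : ∀ k, Λ k ∈ Set.Icc (0 : ℝ) 1) {f : ℝ → ℝ}
    (hf : GoodDens f) {m : Fin n → ℝ} (i : Fin n) (hm : m i ∈ Set.Ioo (0 : ℝ) 1)
    (h0 : HH Λ f m i = 0) {t : ℝ} (ht : 0 ≤ t) :
    0 ≤ HH Λ f (fun i => m i + t) i := by
  have h := integral_mono ((HH_int hΛ hf m i).const_mul (f (m i + t)))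
    ((shift_int hΛ hf m i t).const_mul (f (m i))) (shift_pt hΛ hf m i ht)
  simp only [integral_const_mul] at h
  rw [← HH_shift] at h
  change f (m i + t) * HH Λ f m i ≤ _ at h
  rw [h0, mul_zero] at h
  exact nonneg_of_mul_nonneg_right h (hf.pos _ hm)

lemma int_pos_of {F : ℝ → ℝ} (hF : Integrable F) (h0 : ∀ x, 0 ≤ F x) {a b : ℝ} (hab : a < b)
    (h : ∀ x ∈ Set.Ioo a b, 0 < F x) : 0 < ∫ x, F x := by
  rw [integral_pos_iff_support_of_nonneg h0 hF]
  refine lt_of_lt_of_le ?_ (measure_mono (show Set.Ioo a b ⊆ _ from fun x hx => (h x hx).ne'))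
  simp [hab]

lemma shift_pos {n : ℕ} {Λ : ℕ → ℝ} (hΛ : ∀ k, Λ k ∈ Set.Icc (0 : ℝ) 1) {f : ℝ → ℝ}
    (hf : GoodDens f) {m : Fin n → ℝ} (hmF : m ∈ Fplus n) (i : Fin n)
    (h0 : HH Λ f m i = 0) {t : ℝ} (ht : 0 < t) (hΛi : 0 < Λ i.1) :
    0 < HH Λ f (fun i => m i + t) i := by
  have hm := hmF.2 i
  have h := int_pos_of (F := fun y => f (m i) * (Λ (Nat.dist i.1 (cnt m y)) * (m i - y) * f (y + t))
      - f (m i + t) * (Λ (Nat.dist i.1 (cnt m y)) * (m i - y) * f y))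
    (((shift_int hΛ hf m i t).const_mul (f (m i))).sub
      ((HH_int hΛ hf m i).const_mul (f (m i + t))))
    (fun x => sub_nonneg.2 (shift_pt hΛ hf m i ht.le x)) (a := -t) (b := min 0 (1 - t))
    (by rw [lt_min_iff]; constructor <;> linarith) (by
      intro y hy
      have hy0 : y < 0 := hy.2.trans_le (min_le_left _ _)
      have hy1 : y < 1 - t := hy.2.trans_le (min_le_right _ _)
      have hc : cnt m y = 0 := by
        have := cnt_le_idx (x := y) hmF.1.monotone (i := ⟨0, i.pos⟩)
          (hy0.trans (hmF.2 _).1)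
        simpa using this
      simp only [hc, hf.zero y (fun h => by linarith [h.1]), mul_zero, sub_zero]
      have : Nat.dist i.1 0 = i.1 := by simp [Nat.dist]
      rw [this]
      exact mul_pos (hf.pos _ hm) (mul_pos (mul_pos hΛi (by linarith [hm.1]))
        (hf.pos _ ⟨by linarith [hy.1], by linarith⟩)))
  rw [integral_sub ((shift_int hΛ hf m i t).const_mul (f (m i)))
      ((HH_int hΛ hf m i).const_mul (f (m i + t)))] at h
  simp only [integral_const_mul] at h
  rw [← HH_shift] at h
  change 0 < _ - f (m i + t) * HH Λ f m i at h
  rw [h0, mul_zero, sub_zero] at h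
  exact pos_of_mul_pos_right h (hf.pos _ hm).le

lemma coop_pt {n : ℕ} {Λ : ℕ → ℝ} (hanti : Antitone Λ) {f : ℝ → ℝ}
    (hf : GoodDens f) {m m' : Fin n → ℝ} (hm : Monotone m) (hm' : Monotone m')
    (hle : ∀ i, m i ≤ m' i) {i : Fin n} (hi : m i = m' i) (x : ℝ) :
    Λ (Nat.dist i.1 (cnt m' x)) * (m' i - x) * f x ≤
    Λ (Nat.dist i.1 (cnt m x)) * (m i - x) * f x := by
  apply mul_le_mul_of_nonneg_right _ (hf.nonneg x)
  rw [← hi]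
  have h1 := cnt_anti hle x
  rcases lt_trichotomy x (m i) with h | h | h
  · have h2 := cnt_le_idx hm h
    apply mul_le_mul_of_nonneg_right _ (by linarith)
    apply hanti
    rw [Nat.dist_eq_sub_of_le_right h2, Nat.dist_eq_sub_of_le_right (h1.trans h2)]
    omega
  · simp [h]
  · have h2 := idx_le_cnt hm' (hi ▸ h)
    apply mul_le_mul_of_nonpos_right _ (by linarith)
    apply hanti
    rw [Nat.dist_eq_sub_of_le h2, Nat.dist_eq_sub_of_le (h2.trans h1)]
    omega

lemma coop {n : ℕ} {Λ : ℕ → ℝ} (hΛ : ∀ k, Λ k ∈ Set.Icc (0 : ℝ) 1) (hanti : Antitone Λ)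
    {f : ℝ → ℝ} (hf : GoodDens f) {m m' : Fin n → ℝ} (hm : Monotone m) (hm' : Monotone m')
    (hle : ∀ i, m i ≤ m' i) {i : Fin n} (hi : m i = m' i) :
    HH Λ f m' i ≤ HH Λ f m i :=
  integral_mono (HH_int hΛ hf m' i) (HH_int hΛ hf m i) (coop_pt hanti hf hm hm' hle hi)

lemma lemA_nonneg {n : ℕ} {Λ : ℕ → ℝ} (hΛ : ∀ k, Λ k ∈ Set.Icc (0 : ℝ) 1) (hanti : Antitone Λ)
    {f : ℝ → ℝ} (hf : GoodDens f) {ms : Fin n → ℝ} (hms : ms ∈ Fplus n)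
    (h0 : ∀ i, HH Λ f ms i = 0) {m : Fin n → ℝ} (hm : Monotone m) {t : ℝ} (ht : 0 ≤ t)
    (hle : ∀ i, m i ≤ ms i + t) {i : Fin n} (hi : m i = ms i + t) : 0 ≤ HH Λ f m i :=
  (shift_nonneg hΛ hf i (hms.2 i) (h0 i) ht).trans
    (coop hΛ hanti hf hm (hms.1.monotone.add_const t) hle hi)

lemma lemA_strict {n : ℕ} {Λ : ℕ → ℝ} (hΛ : ∀ k, Λ k ∈ Set.Icc (0 : ℝ) 1) (hanti : Antitone Λ)
    (hH : HLambda n Λ)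
    {f : ℝ → ℝ} (hf : GoodDens f) {ms : Fin n → ℝ} (hms : ms ∈ Fplus n)
    (h0 : ∀ i, HH Λ f ms i = 0) {m : Fin n → ℝ} (hm : Monotone m) (hm1 : ∀ i, m i ≤ 1)
    {t : ℝ} (ht : 0 < t)
    (hle : ∀ i, m i ≤ ms i + t) (hz : ∀ i, m i = ms i + t → HH Λ f m i = 0) :
    ∀ i, m i ≠ ms i + t := by
  obtain ⟨k, -, hk⟩ := hH
  suffices H : ∀ N : ℕ, ∀ i : Fin n, i.1 = N → m i ≠ ms i + t from fun i => H _ i rfl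
  intro N
  induction N using Nat.strong_induction_on with
  | _ N ih =>
  intro i hiN hi
  have hmm : Monotone (fun i => ms i + t) := hms.1.monotone.add_const t
  have hc := coop hΛ hanti hf hm hmm hle hi
  rw [hz i hi] at hc
  by_cases hik : i.1 ≤ k
  · have : 0 < Λ i.1 := by
      have := hanti hik
      have := (hΛ (k+1)).1
      linarith
    have := shift_pos hΛ hf hms i (h0 i) ht this
    linarith
  · push Not at hik
    have hc' := shift_nonneg hΛ hf i (hms.2 i) (h0 i) ht.le
    -- j = i - k
    have hjn : i.1 - k < n := by omega
    have hj1 : 1 ≤ i.1 - k := by omega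
    have hne := ih (i.1 - k - 1) (by omega) ⟨i.1 - k - 1, by omega⟩ rfl
    have hb : somBnd m (i.1 - k) < somBnd (fun i => ms i + t) (i.1 - k) := by
      rw [bnd_eq _ hj1 hjn, bnd_eq _ hj1 hjn]
      have := lt_of_le_of_ne (hle _) hne
      have := hle ⟨i.1 - k, hjn⟩
      linarith
    have hb0 : 0 < somBnd (fun i => ms i + t) (i.1 - k) := by
      rw [bnd_eq _ hj1 hjn]
      have := (hms.2 ⟨i.1 - k, hjn⟩).1
      have := (hms.2 ⟨i.1 - k - 1, by omega⟩).1
      linarith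
    have hbi : somBnd (fun i => ms i + t) (i.1 - k) < m i := by
      rw [bnd_eq _ hj1 hjn, hi]
      have := hms.1.monotone (show (⟨i.1 - k, hjn⟩ : Fin n) ≤ i from Nat.sub_le _ _)
      have := hms.1 (show (⟨i.1 - k - 1, by omega⟩ : Fin n) < i from by
        show i.1 - k - 1 < i.1
        omega)
      linarith
    have h := int_pos_of (F := fun x => Λ (Nat.dist i.1 (cnt m x)) * (m i - x) * f x
      - Λ (Nat.dist i.1 (cnt (fun i => ms i + t) x)) * ((fun i => ms i + t) i - x) * f x)
      ((HH_int hΛ hf m i).sub (HH_int hΛ hf (fun i => ms i + t) i))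
      (fun x => sub_nonneg.2 (coop_pt hanti hf hm hmm hle hi x))
      (max_lt hb hb0) (by
        intro x hx
        have hx0 := (le_max_right _ _).trans_lt hx.1
        have hxm := (le_max_left _ _).trans_lt hx.1
        have hxi := hx.2.trans hbi
        have c1 : i.1 - k ≤ cnt m x := le_cnt_of hjn fun j hj hj1 =>
          (bnd_mono hm hj1 hj hjn).trans_lt hxm
        have c2 := cnt_le_idx hm hxi
        have c3 : cnt (fun i => ms i + t) x ≤ i.1 - k - 1 := cnt_le_of fun j hj hj1' hjn' =>
          hx.2.le.trans (bnd_mono hmm hj1 (by omega) hjn')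
        have hfx := hf.pos x ⟨hx0, hxi.trans_le (hm1 i)⟩
        simp only
        rw [← hi, ← sub_mul, ← sub_mul]
        refine mul_pos (mul_pos ?_ (by linarith)) hfx
        rw [Nat.dist_eq_sub_of_le_right c2, Nat.dist_eq_sub_of_le_right (by omega)]
        have e1 := hanti (show i.1 - cnt m x ≤ k by omega)
        have e2 := hanti (show k + 1 ≤ i.1 - cnt (fun i => ms i + t) x by omega)
        linarith)
    rw [integral_sub (HH_int hΛ hf m i) (HH_int hΛ hf (fun i => ms i + t) i)] at h
    change 0 < HH Λ f m i - HH Λ f (fun i => ms i + t) i at h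
    rw [hz i hi] at h
    linarith

lemma GoodDens.refl {f : ℝ → ℝ} (hf : GoodDens f) : GoodDens (fun x => f (1 - x)) where
  meas := hf.meas.comp (measurable_const.sub measurable_id)
  nonneg := fun x => hf.nonneg _
  int := hf.int.comp_sub_left 1
  pos := fun x hx => hf.pos _ ⟨by linarith [hx.2], by linarith [hx.1]⟩
  zero := fun x hx => hf.zero _ fun h => hx ⟨by linarith [h.2], by linarith [h.1]⟩
  four := fun y z t ht hyz => by
    have := hf.four (1 - (z + t)) (1 - (y + t)) t ht (by linarith)
    have e1 : 1 - (y + t) + t = 1 - y := by ring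
    have e2 : 1 - (z + t) + t = 1 - z := by ring
    rw [e1, e2] at this
    linarith

lemma bnd_refl {n : ℕ} (m : Fin n → ℝ) {j : ℕ} (h1 : 1 ≤ j) (h2 : j < n) :
    somBnd (fun i => 1 - m i.rev) j = 1 - somBnd m (n - j) := by
  rw [bnd_eq _ h1 h2, bnd_eq _ (by omega) (by omega)]
  have e1 : (⟨j - 1, lt_of_le_of_lt (Nat.sub_le j 1) h2⟩ : Fin n).rev = ⟨n - j, by omega⟩ := by
    ext; simp [Fin.rev]; omega
  have e2 : (⟨j, h2⟩ : Fin n).rev = ⟨n - j - 1, by omega⟩ := by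
    ext; simp [Fin.rev]; omega
  simp only [e1, e2]
  ring

lemma cnt_le {n : ℕ} (m : Fin n → ℝ) (x : ℝ) : cnt m x ≤ n - 1 := by
  refine (Finset.card_filter_le _ _).trans ?_
  simp

lemma cnt_refl {n : ℕ} (m : Fin n → ℝ) (x : ℝ) (hx : ∀ j, somBnd m j ≠ x) :
    cnt (fun i => 1 - m i.rev) (1 - x) + cnt m x = n - 1 := by
  have h1 : cnt (fun i => 1 - m i.rev) (1 - x) =
      ((Finset.Ico 1 n).filter (fun j => ¬ somBnd m j < x)).card := by
    unfold cnt
    apply Finset.card_bij (fun j _ => n - j)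
    · intro j hj
      simp only [Finset.mem_filter, Finset.mem_Ico] at hj ⊢
      obtain ⟨⟨h1, h2⟩, h3⟩ := hj
      rw [bnd_refl m h1 h2] at h3
      exact ⟨⟨by omega, by omega⟩, by linarith⟩
    · intro a ha b hb hab
      simp only [Finset.mem_filter, Finset.mem_Ico] at ha hb
      omega
    · intro j hj
      simp only [Finset.mem_filter, Finset.mem_Ico] at hj
      refine ⟨n - j, ?_, by omega⟩
      simp only [Finset.mem_filter, Finset.mem_Ico]
      refine ⟨⟨by omega, by omega⟩, ?_⟩
      rw [bnd_refl m (by omega) (by omega)]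
      have : n - (n - j) = j := by omega
      rw [this]
      have := lt_of_le_of_ne (not_lt.1 hj.2) (hx j).symm
      linarith
  rw [h1, add_comm]
  unfold cnt
  rw [Finset.card_filter_add_card_filter_not]
  simp

lemma ae_bnd {n : ℕ} (m : Fin n → ℝ) : ∀ᵐ x : ℝ, ∀ j, somBnd m j ≠ x := by
  rw [ae_all_iff]
  intro j
  have : ∀ᵐ x : ℝ, x ≠ somBnd m j := by
    simp [ae_iff]
  filter_upwards [this] with x hx using hx.symm

lemma HH_refl {n : ℕ} (Λ : ℕ → ℝ) (f : ℝ → ℝ) (m : Fin n → ℝ) (i : Fin n) :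
    HH Λ (fun x => f (1 - x)) (fun i => 1 - m i.rev) i = - HH Λ f m i.rev := by
  unfold HH
  rw [← integral_sub_left_eq_self _ volume 1, ← integral_neg]
  apply integral_congr_ae
  filter_upwards [ae_bnd m] with x hx
  have h1 := cnt_refl m x hx
  have h2 : Nat.dist i.1 (cnt (fun i => 1 - m i.rev) (1 - x)) = Nat.dist i.rev.1 (cnt m x) := by
    have := i.2
    rw [Fin.val_rev]
    generalize cnt (fun i => 1 - m i.rev) (1 - x) = c at *
    simp only [Nat.dist]
    omega
  rw [h2]
  simp only [sub_sub_cancel]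
  ring

lemma lemB_nonpos {n : ℕ} {Λ : ℕ → ℝ} (hΛ : ∀ k, Λ k ∈ Set.Icc (0 : ℝ) 1) (hanti : Antitone Λ)
    {f : ℝ → ℝ} (hf : GoodDens f) {ms : Fin n → ℝ} (hms : ms ∈ Fplus n)
    (h0 : ∀ i, HH Λ f ms i = 0) {m : Fin n → ℝ} (hm : Monotone m) {t : ℝ} (ht : 0 ≤ t)
    (hle : ∀ i, ms i - t ≤ m i) {i : Fin n} (hi : m i = ms i - t) : HH Λ f m i ≤ 0 := by
  have hms' : (fun i : Fin n => 1 - ms i.rev) ∈ Fplus n :=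
    ⟨fun a b hab => by
      have := hms.1 (Fin.rev_lt_rev.2 hab)
      simp only; linarith,
     fun i => ⟨by linarith [(hms.2 i.rev).2], by linarith [(hms.2 i.rev).1]⟩⟩
  have := lemA_nonneg hΛ hanti hf.refl hms' (fun i => by rw [HH_refl, h0, neg_zero])
    (m := fun i => 1 - m i.rev) (fun a b hab => by
      have := hm (Fin.rev_le_rev.2 hab)
      simp only; linarith) ht (fun i => by linarith [hle i.rev]) (i := i.rev)
      (by rw [Fin.rev_rev]; linarith)
  rw [HH_refl, Fin.rev_rev] at this
  linarith

lemma lemB_strict {n : ℕ} {Λ : ℕ → ℝ} (hΛ : ∀ k, Λ k ∈ Set.Icc (0 : ℝ) 1) (hanti : Antitone Λ)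
    (hH : HLambda n Λ)
    {f : ℝ → ℝ} (hf : GoodDens f) {ms : Fin n → ℝ} (hms : ms ∈ Fplus n)
    (h0 : ∀ i, HH Λ f ms i = 0) {m : Fin n → ℝ} (hm : Monotone m) (hm1 : ∀ i, 0 ≤ m i)
    {t : ℝ} (ht : 0 < t)
    (hle : ∀ i, ms i - t ≤ m i) (hz : ∀ i, m i = ms i - t → HH Λ f m i = 0) :
    ∀ i, m i ≠ ms i - t := by
  have hms' : (fun i : Fin n => 1 - ms i.rev) ∈ Fplus n :=
    ⟨fun a b hab => by
      have := hms.1 (Fin.rev_lt_rev.2 hab)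
      simp only; linarith,
     fun i => ⟨by linarith [(hms.2 i.rev).2], by linarith [(hms.2 i.rev).1]⟩⟩
  have := lemA_strict hΛ hanti hH hf.refl hms' (fun i => by rw [HH_refl, h0, neg_zero])
    (m := fun i => 1 - m i.rev) (fun a b hab => by
      have := hm (Fin.rev_le_rev.2 hab)
      simp only; linarith) (fun i => by linarith [hm1 i.rev]) ht
      (fun i => by linarith [hle i.rev]) (fun i hi => by
        rw [HH_refl, hz i.rev (by linarith), neg_zero])
  intro i hi
  apply this i.rev
  rw [Fin.rev_rev]
  linarith

lemma winner_eq {n : ℕ} [NeZero n] {m : Fin n → ℝ} (hm : StrictMono m) (x : ℝ) :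
    (winner m x).1 = cnt m x := by
  have hmem : winner m x ∈ (Finset.univ.filter fun i : Fin n => ∀ j, |x - m i| ≤ |x - m j|) :=
    Finset.min'_mem _ _
  have hmin : ∀ l ∈ (Finset.univ.filter fun i : Fin n => ∀ j, |x - m i| ≤ |x - m j|),
      winner m x ≤ l := fun l hl => Finset.min'_le _ _ hl
  generalize winner m x = w at hmem hmin
  rw [Finset.mem_filter] at hmem
  have hw := hmem.2
  have hlt : ∀ l, l < w → |x - m w| < |x - m l| := by
    intro l hl
    by_contra hc
    push Not at hc
    have := hmin l (Finset.mem_filter.2 ⟨Finset.mem_univ _, fun j => hc.trans (hw j)⟩)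
    exact absurd hl (not_lt.2 this)
  apply le_antisymm
  · apply le_cnt_of w.2
    intro j hj h1
    have hjn : w.1 < n := w.2
    refine (bnd_mono hm.monotone h1 hj w.2).trans_lt ?_
    have hw1 : 1 ≤ w.1 := h1.trans hj
    rw [bnd_eq m hw1 w.2]
    have hl : (⟨w.1 - 1, by omega⟩ : Fin n) < w := by
      show w.1 - 1 < w.1
      omega
    have e1 := hlt _ hl
    have e2 := hm hl
    change _ < m w at e2
    have e3 := sq_lt_sq.2 e1
    change (m _ + m w) / 2 < x
    nlinarith
  · apply cnt_le_of
    intro j hj h1 hjn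
    refine le_trans ?_ (bnd_mono hm.monotone (j := w.1 + 1) (by omega) hj hjn)
    rw [bnd_eq m (by omega) (by omega)]
    have hl : w < (⟨w.1 + 1, by omega⟩ : Fin n) := by
      show w.1 < w.1 + 1
      omega
    have e1 := hw ⟨w.1 + 1, by omega⟩
    have e2 := hm hl
    have e3 := sq_le_sq.2 e1
    change x ≤ (m w + _) / 2
    nlinarith

lemma HH_cont {n : ℕ} {Λ : ℕ → ℝ} (hΛ : ∀ k, Λ k ∈ Set.Icc (0 : ℝ) 1) {f : ℝ → ℝ}
    (hf : GoodDens f) (i : Fin n) : Continuous (fun m => HH Λ f m i) := by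
  have hb : ∀ j, Continuous (fun m : Fin n → ℝ => somBnd m j) := by
    intro j
    unfold somBnd
    split_ifs <;> fun_prop
  rw [continuous_iff_continuousAt]
  intro m
  apply continuousAt_of_dominated (bound := fun x => (|m i| + 2) * f x)
  · exact Eventually.of_forall fun m => (HH_int hΛ hf m i).aestronglyMeasurable
  · have : ∀ᶠ m' in 𝓝 m, |m' i| < |m i| + 1 :=
      (continuous_abs.comp (continuous_apply i)).continuousAt.eventually_lt
        continuousAt_const (by simp)
    filter_upwards [this] with m' hm'
    refine ae_of_all _ fun x => ?_
    by_cases hx : x ∈ Set.Ioo (0 : ℝ) 1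
    · rw [Real.norm_eq_abs, abs_mul, abs_mul, abs_of_nonneg (hf.nonneg x)]
      apply mul_le_mul_of_nonneg_right _ (hf.nonneg x)
      have h1 : |Λ (Nat.dist i.1 (cnt m' x))| ≤ 1 := by
        rw [abs_of_nonneg (hΛ _).1]; exact (hΛ _).2
      have h2 : |m' i - x| ≤ |m' i| + 1 := by
        refine (abs_sub _ _).trans ?_
        have : |x| ≤ 1 := abs_le.2 ⟨by linarith [hx.1], hx.2.le⟩
        linarith
      calc _ ≤ 1 * |m' i - x| := mul_le_mul_of_nonneg_right h1 (abs_nonneg _)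
        _ ≤ _ := by linarith
    · simp [hf.zero x hx]
  · exact hf.int.const_mul _
  · filter_upwards [ae_bnd m] with x hx
    have hev : ∀ᶠ m' in 𝓝 m, cnt m' x = cnt m x := by
      have : ∀ᶠ m' in 𝓝 m, ∀ j ∈ Finset.Ico 1 n, (somBnd m' j < x ↔ somBnd m j < x) := by
        rw [Filter.eventually_all_finset]
        intro j _
        rcases lt_or_gt_of_ne (hx j) with h | h
        · filter_upwards [(hb j).continuousAt.eventually_lt continuousAt_const h] with m' hm'
          exact iff_of_true hm' h
        · filter_upwards [continuousAt_const.eventually_lt (hb j).continuousAt h] with m' hm'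
          exact iff_of_false (not_lt.2 hm'.le) (not_lt.2 h.le)
      filter_upwards [this] with m' hm'
      unfold cnt
      rw [Finset.filter_congr hm']
    have hc : ContinuousAt (fun m' : Fin n → ℝ => Λ (Nat.dist i.1 (cnt m x)) * (m' i - x) * f x) m := by
      exact (((continuous_const.mul ((continuous_apply i).sub continuous_const)).mul
        continuous_const)).continuousAt
    refine hc.congr ?_
    filter_upwards [hev] with m' hm'
    rw [hm']

lemma goodDens_of {f : ℝ → ℝ} (hHμ : Hmu f)
    (μ : Measure ℝ) [IsProbabilityMeasure μ]
    (hdens : μ = volume.withDensity fun x => ENNReal.ofReal (f x))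
    (hsupp : ∀ x, x ∉ Set.Icc (0 : ℝ) 1 → f x = 0) :
    ∃ f0 : ℝ → ℝ, GoodDens f0 ∧ f =ᵐ[volume] f0 ∧
      μ = volume.withDensity (fun x => ENNReal.ofReal (f0 x)) := by
  obtain ⟨hpos, hor⟩ := hHμ
  have hconc : ConcaveOn ℝ (Set.Ioo (0 : ℝ) 1) (fun x => Real.log (f x)) := by
    rcases hor with h | h
    · exact h.concaveOn
    · exact h.1
  have hcont : ContinuousOn f (Set.Ioo (0 : ℝ) 1) := by
    have h1 : ContinuousOn (fun x => Real.log (f x)) (Set.Ioo (0 : ℝ) 1) :=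
      hconc.continuousOn isOpen_Ioo
    refine (Real.continuous_exp.comp_continuousOn h1).congr fun x hx => ?_
    simp [Real.exp_log (hpos x hx)]
  set f0 : ℝ → ℝ := (Set.Ioo (0 : ℝ) 1).indicator f with hf0
  have hmeas : Measurable f0 := by
    rw [hf0, ← Set.piecewise_eq_indicator]
    exact ContinuousOn.measurable_piecewise hcont continuousOn_const measurableSet_Ioo
  have hin : ∀ x ∈ Set.Ioo (0 : ℝ) 1, f0 x = f x := fun x hx => Set.indicator_of_mem hx f
  have hout : ∀ x, x ∉ Set.Ioo (0 : ℝ) 1 → f0 x = 0 := fun x hx => Set.indicator_of_notMem hx f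
  have hae : f =ᵐ[volume] f0 := by
    have h0 : ∀ᵐ x : ℝ, x ≠ 0 := by simp [ae_iff]
    have h1 : ∀ᵐ x : ℝ, x ≠ 1 := by simp [ae_iff]
    filter_upwards [h0, h1] with x hx0 hx1
    by_cases hx : x ∈ Set.Ioo (0 : ℝ) 1
    · rw [hin x hx]
    · rw [hout x hx]
      apply hsupp
      intro h
      exact hx ⟨lt_of_le_of_ne h.1 hx0.symm, lt_of_le_of_ne h.2 hx1⟩
  have hnn : ∀ x, 0 ≤ f0 x := fun x => by
    by_cases hx : x ∈ Set.Ioo (0 : ℝ) 1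
    · rw [hin x hx]; exact (hpos x hx).le
    · rw [hout x hx]
  have hμ : μ = volume.withDensity (fun x => ENNReal.ofReal (f0 x)) := by
    rw [hdens]
    apply withDensity_congr_ae
    filter_upwards [hae] with x hx
    rw [hx]
  refine ⟨f0, ⟨hmeas, hnn, ?_, ?_, hout, ?_⟩, hae, hμ⟩
  · refine ⟨hmeas.aestronglyMeasurable, ?_⟩
    rw [hasFiniteIntegral_iff_ofReal (ae_of_all _ hnn)]
    have : μ Set.univ = 1 := measure_univ
    rw [hμ, withDensity_apply _ MeasurableSet.univ, Measure.restrict_univ] at this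
    rw [this]
    exact ENNReal.one_lt_top
  · intro x hx
    rw [hin x hx]; exact hpos x hx
  · intro y z t ht hyz
    by_cases hy : y ∈ Set.Ioo (0 : ℝ) 1
    swap
    · rw [hout y hy, zero_mul]; exact mul_nonneg (hnn _) (hnn _)
    by_cases hz : z + t ∈ Set.Ioo (0 : ℝ) 1
    swap
    · rw [hout _ hz, mul_zero]; exact mul_nonneg (hnn _) (hnn _)
    have hyt : y + t ∈ Set.Ioo (0 : ℝ) 1 := ⟨by linarith [hy.1], by linarith [hz.2]⟩
    have hz' : z ∈ Set.Ioo (0 : ℝ) 1 := ⟨by linarith [hy.1], by linarith [hz.2]⟩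
    rw [hin _ hy, hin _ hz, hin _ hyt, hin _ hz']
    rcases (show 0 ≤ z + t - y by linarith).eq_or_lt with h | h
    · have e1 : z = y := by linarith
      have e2 : t = 0 := by linarith
      simp [e1, e2]
    have key : Real.log (f y) + Real.log (f (z + t)) ≤ Real.log (f (y + t)) + Real.log (f z) := by
      have hd := h.ne'
      have a0 : 0 ≤ t / (z + t - y) := div_nonneg ht h.le
      have b0 : 0 ≤ (z - y) / (z + t - y) := div_nonneg (by linarith) h.le
      have hs : (z - y) / (z + t - y) + t / (z + t - y) = 1 := by field_simp; ring
      have k1 := hconc.2 hy hz b0 a0 hs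
      have k2 := hconc.2 hy hz a0 b0 (by rw [add_comm]; exact hs)
      simp only [smul_eq_mul] at k1 k2
      have e1 : (z - y) / (z + t - y) * y + t / (z + t - y) * (z + t) = y + t := by
        field_simp; ring
      have e2 : t / (z + t - y) * y + (z - y) / (z + t - y) * (z + t) = z := by
        field_simp; ring
      rw [e1] at k1
      rw [e2] at k2
      have : (z - y) / (z + t - y) = 1 - t / (z + t - y) := by linarith
      rw [this] at k1 k2
      linarith
    rw [← Real.log_mul (hpos _ hy).ne' (hpos _ hz).ne',
      ← Real.log_mul (hpos _ hyt).ne' (hpos _ hz').ne'] at key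
    exact (Real.log_le_log_iff (mul_pos (hpos _ hy) (hpos _ hz))
      (mul_pos (hpos _ hyt) (hpos _ hz'))).1 key

lemma meanField_eq {n : ℕ} {Λ : ℕ → ℝ} (hΛ : ∀ k, Λ k ∈ Set.Icc (0 : ℝ) 1)
    {f f0 : ℝ → ℝ} (hf : GoodDens f0) (hae : f =ᵐ[volume] f0) {m : Fin n → ℝ}
    (hm : m ∈ Fplus n) (i : Fin n) : meanField Λ f m i = HH Λ f0 m i := by
  have hmon := hm.1.monotone
  have hb0 : ∀ j, j < n → 0 ≤ somBnd m j := by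
    intro j hj
    by_cases h : j = 0
    · simp [somBnd, h]
    · exact (hm.2 ⟨0, i.pos⟩).1.le.trans (le_bnd hmon hj _ (Nat.pos_of_ne_zero h))
  have hb1 : ∀ j, 1 ≤ j → somBnd m j ≤ 1 := by
    intro j hj
    by_cases h : j < n
    · exact (bnd_le hmon hj ⟨j, h⟩ le_rfl).trans (hm.2 _).2.le
    · simp [somBnd, h, show j ≠ 0 by omega]
  have hx1 : ∀ x ∈ Set.Ioo (0 : ℝ) 1, (∀ j, somBnd m j ≠ x) → ∀ j : Fin n,
      (x ∈ Set.Icc (somBnd m j.1) (somBnd m (j.1 + 1)) ↔ cnt m x = j.1) := by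
    intro x hx hne j
    constructor
    · rintro ⟨h1, h2⟩
      apply le_antisymm
      · apply cnt_le_of
        intro l hl hl1 hln
        exact h2.trans (bnd_mono hmon (by omega) hl hln)
      · apply le_cnt_of j.2
        intro l hl hl1
        exact (bnd_mono hmon hl1 hl j.2).trans_lt (lt_of_le_of_ne h1 (hne _))
    · intro h
      constructor
      · by_contra hc
        push Not at hc
        have hj0 : j.1 ≠ 0 := by
          intro h0
          rw [h0] at hc
          simp [somBnd] at hc
          linarith [hx.1]
        have : cnt m x ≤ j.1 - 1 := cnt_le_of fun l hl hl1 hln =>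
          hc.le.trans (bnd_mono hmon (by omega) (by omega) hln)
        omega
      · by_contra hc
        push Not at hc
        have hjn : j.1 + 1 < n := by
          by_contra hcn
          simp [somBnd, hcn] at hc
          linarith [hx.2]
        have : j.1 + 1 ≤ cnt m x := le_cnt_of hjn fun l hl hl1 =>
          (bnd_mono hmon hl1 hl hjn).trans_lt hc
        omega
  unfold meanField HH
  have hbase : Integrable (fun x => (m i - x) * f0 x) := by
    have := HH_int (Λ := fun _ => 1) (fun _ => by simp) hf m i
    simpa using this
  have e1 : ∀ j : Fin n, Λ (Nat.dist i.1 j.1) *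
      ∫ x in Set.Icc (somBnd m j.1) (somBnd m (j.1 + 1)), (m i - x) * f x =
      ∫ x, Λ (Nat.dist i.1 j.1) *
        (Set.Icc (somBnd m j.1) (somBnd m (j.1 + 1))).indicator (fun x => (m i - x) * f0 x) x := by
    intro j
    rw [integral_const_mul, integral_indicator measurableSet_Icc]
    congr 1
    apply integral_congr_ae
    filter_upwards [ae_restrict_of_ae hae] with x hx
    rw [hx]
  simp only [e1]
  rw [← integral_finsetSum _ (fun j _ => (hbase.indicator measurableSet_Icc).const_mul _)]
  apply integral_congr_ae
  filter_upwards [ae_bnd m] with x hne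
  by_cases hx : x ∈ Set.Ioo (0 : ℝ) 1
  · have hc : cnt m x < n := by
      have := cnt_le m x
      have := i.2
      omega
    rw [Finset.sum_eq_single (⟨cnt m x, hc⟩ : Fin n)]
    · rw [Set.indicator_of_mem ((hx1 x hx hne _).2 rfl)]
      ring
    · intro j _ hj
      rw [Set.indicator_of_notMem, mul_zero]
      intro h
      apply hj
      ext
      exact ((hx1 x hx hne j).1 h).symm
    · simp
  · simp [hf.zero x hx, Set.indicator]

lemma lse_ineq {ι : Type*} [Fintype ι] (a b : ι → ℝ) :
    Real.log (1 + ∑ i, Real.exp (b i)) ≤ Real.log (1 + ∑ i, Real.exp (a i)) +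
      ∑ i, Real.exp (b i) / (1 + ∑ j, Real.exp (b j)) * (b i - a i) := by
  have hB : 0 < 1 + ∑ i, Real.exp (b i) := by positivity
  have hA : 0 < 1 + ∑ i, Real.exp (a i) := by positivity
  set B := 1 + ∑ i, Real.exp (b i) with hBd
  set A := 1 + ∑ i, Real.exp (a i) with hAd
  set S := ∑ i, Real.exp (b i) / B * (b i - a i) with hS
  have hS' : ∑ i, Real.exp (b i) * (b i - a i) = B * S := by
    rw [hS, Finset.mul_sum]
    refine Finset.sum_congr rfl fun i _ => ?_
    field_simp
  have h0 : Real.exp (-S) * (1 + S) ≤ 1 := by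
    have := Real.add_one_le_exp S
    have h2 : Real.exp (-S) * Real.exp S = 1 := by rw [← Real.exp_add]; simp
    nlinarith [Real.exp_pos (-S)]
  have hi : ∀ i, Real.exp (-S) * (Real.exp (b i) * (1 + S) - Real.exp (b i) * (b i - a i))
      ≤ Real.exp (a i) := by
    intro i
    have h1 := Real.add_one_le_exp (a i - b i + S)
    have h2 : Real.exp (a i) = Real.exp (-S) * Real.exp (b i) * Real.exp (a i - b i + S) := by
      rw [← Real.exp_add, ← Real.exp_add]; congr 1; ring
    rw [h2]
    have := mul_le_mul_of_nonneg_left h1 (mul_pos (Real.exp_pos (-S)) (Real.exp_pos (b i))).le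
    linarith
  have hsum := Finset.sum_le_sum (s := Finset.univ) fun i _ => hi i
  rw [← Finset.mul_sum, Finset.sum_sub_distrib, ← Finset.sum_mul, hS'] at hsum
  have key : Real.exp (-S) * B ≤ A := by
    have e1 : ∑ i, Real.exp (b i) = B - 1 := by rw [hBd]; ring
    have e2 : ∑ i, Real.exp (a i) = A - 1 := by rw [hAd]; ring
    rw [e1, e2] at hsum
    linarith
  have := Real.log_le_log (mul_pos (Real.exp_pos _) hB) key
  rw [Real.log_mul (Real.exp_pos _).ne' hB.ne', Real.log_exp] at this
  linarith

lemma exp_lim {c : ℝ} (hc : c ≤ 0) :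
    Tendsto (fun β : ℕ => Real.exp (β * c)) atTop (𝓝 (if c = 0 then 1 else 0)) := by
  split_ifs with h
  · simp [h]
  · have hc' : c < 0 := lt_of_le_of_ne hc h
    exact Real.tendsto_exp_atBot.comp (tendsto_natCast_atTop_atTop.atTop_mul_const_of_neg hc')

lemma limit_gen {X : Type*} [MeasurableSpace X] (ν : Measure X) [IsProbabilityMeasure ν]
    {n : ℕ} (u G : Fin n → X → ℝ) (hu : ∀ i, Measurable (u i))
    (hGi : ∀ i, Integrable (G i) ν) (K : Set X) (hK : ∀ᵐ m ∂ν, m ∈ K)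
    (hA : ∀ m ∈ K, ∀ M, 0 ≤ M → (∀ i, u i m ≤ M) → ∀ i, u i m = M → 0 ≤ G i m)
    (hB : ∀ m ∈ K, ∀ M, 0 < M → (∀ i, u i m ≤ M) → (∀ i, u i m = M → G i m = 0) →
      ∀ i, u i m ≠ M)
    (hint : ∀ β : ℕ, 1 ≤ β → ∫ m, ∑ i, Real.exp (β * u i m) / (1 + ∑ j, Real.exp (β * u j m)) * G i m ∂ν ≤ 0) :
    ∀ᵐ m ∂ν, ∀ i, u i m ≤ 0 := by
  have hM : ∀ m, ∃ M, 0 ≤ M ∧ (∀ i, u i m ≤ M) ∧ (M = 0 ∨ ∃ i, u i m = M) := by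
    intro m
    by_cases h : ∀ i, u i m ≤ 0
    · exact ⟨0, le_rfl, h, Or.inl rfl⟩
    · push Not at h
      obtain ⟨i, hi⟩ := h
      obtain ⟨k, -, hk⟩ := Finset.exists_max_image Finset.univ (fun i => u i m) ⟨i, Finset.mem_univ i⟩
      exact ⟨u k m, hi.le.trans (hk i (Finset.mem_univ _)), fun j => hk j (Finset.mem_univ _),
        Or.inr ⟨k, rfl⟩⟩
  choose M hM0 hMle hMor using hM
  let e : ℝ → ℝ := fun c => if c = 0 then 1 else 0
  have he : ∀ c, 0 ≤ e c := fun c => by simp only [e]; split_ifs <;> norm_num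
  let D : X → ℝ := fun m => e (-M m) + ∑ j, e (u j m - M m)
  have hD : ∀ m, 0 < D m := by
    intro m
    rcases hMor m with h | ⟨i, hi⟩
    · have : e (-M m) = 1 := by simp [e, h]
      have h2 : 0 ≤ ∑ j, e (u j m - M m) := Finset.sum_nonneg fun j _ => he _
      simp only [D, this]
      linarith
    · have h1 : e (u i m - M m) = 1 := by simp [e, hi]
      have h2 := Finset.single_le_sum (f := fun j => e (u j m - M m)) (fun j _ => he _)
        (Finset.mem_univ i)
      have := he (-M m)
      simp only [D]
      simp only [h1] at h2
      linarith
  let ψ : X → ℝ := fun m => ∑ i, e (u i m - M m) / D m * G i m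
  let F : ℕ → X → ℝ := fun β m =>
    ∑ i, Real.exp (β * u i m) / (1 + ∑ j, Real.exp (β * u j m)) * G i m
  have hlim : ∀ m, Tendsto (fun β => F β m) atTop (𝓝 (ψ m)) := by
    intro m
    refine tendsto_finsetSum _ fun i _ => Tendsto.mul_const _ ?_
    have hb : ∀ β : ℕ, Real.exp (β * u i m) / (1 + ∑ j, Real.exp (β * u j m)) =
        Real.exp (β * (u i m - M m)) /
          (Real.exp (β * (-M m)) + ∑ j, Real.exp (β * (u j m - M m))) := by
      intro β
      have h1 : ∀ c : ℝ, Real.exp (β * (c - M m)) = Real.exp (β * c) * Real.exp (-(β * M m)) := by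
        intro c; rw [← Real.exp_add]; congr 1; ring
      have h2 : Real.exp (β * (-M m)) = 1 * Real.exp (-(β * M m)) := by
        rw [one_mul]; congr 1; ring
      simp only [h1, h2]
      rw [← Finset.sum_mul, ← add_mul, mul_div_mul_right _ _ (Real.exp_pos _).ne']
    simp only [hb]
    exact (exp_lim (sub_nonpos.2 (hMle m i))).div
      ((exp_lim (neg_nonpos.2 (hM0 m))).add
        (tendsto_finsetSum _ fun j _ => exp_lim (sub_nonpos.2 (hMle m j)))) (hD m).ne'
  have hFm : ∀ β, AEStronglyMeasurable (F β) ν := by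
    intro β
    refine Finset.aestronglyMeasurable_fun_sum _ fun i _ => ?_
    refine AEStronglyMeasurable.mul (Measurable.aestronglyMeasurable ?_) (hGi i).aestronglyMeasurable
    have := hu
    fun_prop
  have hwb : ∀ β : ℕ, ∀ m i, |Real.exp (β * u i m) / (1 + ∑ j, Real.exp (β * u j m))| ≤ 1 := by
    intro β m i
    rw [abs_of_nonneg (by positivity), div_le_one (by positivity)]
    have := Finset.single_le_sum (f := fun j => Real.exp (β * u j m))
      (fun j _ => (Real.exp_pos _).le) (Finset.mem_univ i)
    linarith
  have hbd : Integrable (fun m => ∑ i, |G i m|) ν := integrable_finsetSum _ fun i _ => (hGi i).abs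
  have hFb : ∀ β m, ‖F β m‖ ≤ ∑ i, |G i m| := by
    intro β m
    refine (norm_sum_le _ _).trans (Finset.sum_le_sum fun i _ => ?_)
    rw [Real.norm_eq_abs, abs_mul]
    calc _ ≤ 1 * |G i m| := mul_le_mul_of_nonneg_right (hwb β m i) (abs_nonneg _)
      _ = _ := one_mul _
  have hT := tendsto_integral_of_dominated_convergence (F := F) (f := ψ) (μ := ν) _ hFm hbd
    (fun β => ae_of_all _ (hFb β)) (ae_of_all _ hlim)
  have hle : ∫ m, ψ m ∂ν ≤ 0 :=
    le_of_tendsto hT (eventually_atTop.2 ⟨1, fun β hβ => hint β hβ⟩)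
  have hψm : AEStronglyMeasurable ψ ν :=
    aestronglyMeasurable_of_tendsto_ae atTop hFm (ae_of_all _ hlim)
  have hψi : Integrable ψ ν := hbd.mono' hψm (ae_of_all _ fun m =>
    le_of_tendsto (hlim m).norm (Eventually.of_forall fun β => hFb β m))
  have hterm : ∀ m ∈ K, ∀ i, 0 ≤ e (u i m - M m) / D m * G i m := by
    intro m hm i
    by_cases h : u i m = M m
    · exact mul_nonneg (div_nonneg (he _) (hD m).le) (hA m hm _ (hM0 m) (hMle m) i h)
    · have : e (u i m - M m) = 0 := by simp [e, sub_eq_zero, h]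
      simp [this]
  have hψ0 : 0 ≤ᵐ[ν] ψ := by
    filter_upwards [hK] with m hm
    exact Finset.sum_nonneg fun i _ => hterm m hm i
  have hz : ψ =ᵐ[ν] 0 :=
    (integral_eq_zero_iff_of_nonneg_ae hψ0 hψi).1 (le_antisymm hle (integral_nonneg_of_ae hψ0))
  filter_upwards [hK, hz] with m hm hzm
  have hall := (Finset.sum_eq_zero_iff_of_nonneg (fun i _ => hterm m hm i)).1 hzm
  rcases hMor m with h0 | ⟨i, hi⟩
  · intro i; exact (hMle m i).trans h0.le
  · rcases (hM0 m).eq_or_lt with h0 | h0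
    · intro i; exact (hMle m i).trans h0.ge
    · exfalso
      refine hB m hm (M m) h0 (hMle m) (fun j hj => ?_) i hi
      have h1 := hall j (Finset.mem_univ j)
      have h2 : e (u j m - M m) = 1 := by simp [e, hj]
      rw [h2] at h1
      rcases mul_eq_zero.1 h1 with h | h
      · exact absurd h (div_pos one_pos (hD m)).ne'
      · exact h

def Kset (n : ℕ) : Set (Fin n → ℝ) := {m | Monotone m ∧ ∀ i, m i ∈ Set.Icc (0 : ℝ) 1}

lemma Kset_closed (n : ℕ) : IsClosed (Kset n) := by
  have : Kset n = (⋂ i, ⋂ j, ⋂ (_ : i ≤ j), {m : Fin n → ℝ | m i ≤ m j}) ∩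
      ⋂ i, {m : Fin n → ℝ | m i ∈ Set.Icc (0 : ℝ) 1} := by
    ext m
    simp only [Kset, Monotone, Set.mem_inter_iff, Set.mem_iInter, Set.mem_setOf_eq]
  rw [this]
  refine IsClosed.inter (isClosed_iInter fun i => isClosed_iInter fun j => isClosed_iInter fun _ =>
    isClosed_le (continuous_apply i) (continuous_apply j)) (isClosed_iInter fun i =>
    isClosed_Icc.preimage (continuous_apply i))

lemma cube_compact (n : ℕ) : IsCompact {m : Fin n → ℝ | ∀ i, m i ∈ Set.Icc (0 : ℝ) 1} := by
  have := isCompact_univ_pi (s := fun _ : Fin n => Set.Icc (0 : ℝ) 1) (fun _ => isCompact_Icc)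
  convert this using 1
  ext m
  simp only [Set.mem_univ_pi]
  rfl

lemma Kset_compact (n : ℕ) : IsCompact (Kset n) :=
  (cube_compact n).of_isClosed_subset (Kset_closed n) fun _ h => h.2

lemma Fplus_sub (n : ℕ) : Fplus n ⊆ Kset n :=
  fun _ h => ⟨h.1.monotone, fun i => ⟨(h.2 i).1.le, (h.2 i).2.le⟩⟩

lemma Fplus_meas (n : ℕ) : MeasurableSet (Fplus n) := by
  have : Fplus n = (⋂ i, ⋂ j, ⋂ (_ : i < j), {m : Fin n → ℝ | m i < m j}) ∩
      ⋂ i, {m : Fin n → ℝ | m i ∈ Set.Ioo (0 : ℝ) 1} := by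
    ext m
    simp only [Fplus, StrictMono, Set.mem_inter_iff, Set.mem_iInter, Set.mem_setOf_eq]
  rw [this]
  refine MeasurableSet.inter (MeasurableSet.iInter fun i => MeasurableSet.iInter fun j =>
    MeasurableSet.iInter fun _ => measurableSet_lt (measurable_pi_apply i) (measurable_pi_apply j))
    (MeasurableSet.iInter fun i => measurableSet_Ioo.preimage (measurable_pi_apply i))

lemma int_of_cont {n : ℕ} (ν : Measure (Fin n → ℝ)) [IsProbabilityMeasure ν]
    (hK : ∀ᵐ m ∂ν, m ∈ Kset n) {G : (Fin n → ℝ) → ℝ} (hG : Continuous G) : Integrable G ν := by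
  have h := hG.continuousOn.integrableOn_compact (μ := ν) (Kset_compact n)
  rwa [IntegrableOn, Measure.restrict_eq_self_of_ae_mem hK] at h

def wgt {n : ℕ} (c : ℝ) (ms m : Fin n → ℝ) (i : Fin n) : ℝ :=
  Real.exp (c * (m i - ms i)) / (1 + ∑ j, Real.exp (c * (m j - ms j)))

lemma wgt_cont {n : ℕ} (c : ℝ) (ms : Fin n → ℝ) (i : Fin n) :
    Continuous (fun m => wgt c ms m i) := by
  unfold wgt
  refine Continuous.div (by fun_prop) (by fun_prop) fun m => ?_
  positivity

lemma pt_step {n : ℕ} [NeZero n] {Λ : ℕ → ℝ} (hΛ : ∀ k, Λ k ∈ Set.Icc (0 : ℝ) 1)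
    (ms : Fin n → ℝ) (c ε η : ℝ) (hε : ε ∈ Set.Ioo (0 : ℝ) 1)
    (hη : ∀ m T : Fin n → ℝ, (∀ i, m i ∈ Set.Icc (0 : ℝ) 1) → (∀ i, T i ∈ Set.Icc (0 : ℝ) 1) →
      (∀ i, |T i - m i| ≤ ε) → ∀ i, |wgt c ms T i - wgt c ms m i| ≤ η)
    {m : Fin n → ℝ} (hm : m ∈ Fplus n) {x : ℝ} (hx : x ∈ Set.Icc (0 : ℝ) 1) :
    Real.log (1 + ∑ i, Real.exp (c * (somUpdate Λ ε m x i - ms i))) ≤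
      Real.log (1 + ∑ i, Real.exp (c * (m i - ms i)))
        - ε * (c * ∑ i, wgt c ms m i * (Λ (Nat.dist i.1 (cnt m x)) * (m i - x)))
        + ε * (|c| * (n * η)) := by
  have hT : ∀ i, somUpdate Λ ε m x i = m i - ε * (Λ (Nat.dist i.1 (cnt m x)) * (m i - x)) := by
    intro i
    simp only [somUpdate, winner_eq hm.1]
    ring
  have hY : ∀ i, |Λ (Nat.dist i.1 (cnt m x)) * (m i - x)| ≤ 1 := by
    intro i
    rw [abs_mul, abs_of_nonneg (hΛ _).1]
    have h1 := (hΛ (Nat.dist i.1 (cnt m x)))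
    have h2 : |m i - x| ≤ 1 := abs_le.2 ⟨by linarith [(hm.2 i).1, hx.2], by linarith [(hm.2 i).2, hx.1]⟩
    exact mul_le_one₀ h1.2 (abs_nonneg _) h2
  have hTI : ∀ i, somUpdate Λ ε m x i ∈ Set.Icc (0 : ℝ) 1 := by
    intro i
    rw [hT]
    have h1 := (hΛ (Nat.dist i.1 (cnt m x)))
    have h2 := hm.2 i
    set a := Λ (Nat.dist i.1 (cnt m x))
    have h3 : 0 ≤ ε * a := mul_nonneg hε.1.le h1.1
    have h4 : ε * a ≤ 1 := mul_le_one₀ hε.2.le h1.1 h1.2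
    have e : m i - ε * (a * (m i - x)) = (1 - ε * a) * m i + ε * a * x := by ring
    rw [e]
    constructor
    · have := mul_nonneg (sub_nonneg.2 h4) h2.1.le
      have := mul_nonneg h3 hx.1
      linarith
    · have := mul_le_mul_of_nonneg_left h2.2.le (sub_nonneg.2 h4)
      have := mul_le_mul_of_nonneg_left hx.2 h3
      linarith
  have hw := hη m (somUpdate Λ ε m x) (fun i => ⟨(hm.2 i).1.le, (hm.2 i).2.le⟩) hTI (by
    intro i
    rw [hT, sub_sub_cancel_left, abs_neg, abs_mul, abs_of_pos hε.1]
    exact mul_le_of_le_one_right hε.1.le (hY i))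
  have h := lse_ineq (fun i => c * (m i - ms i)) (fun i => c * (somUpdate Λ ε m x i - ms i))
  refine h.trans ?_
  have hterm : ∀ i ∈ Finset.univ, Real.exp (c * (somUpdate Λ ε m x i - ms i)) /
      (1 + ∑ j, Real.exp (c * (somUpdate Λ ε m x j - ms j))) *
      (c * (somUpdate Λ ε m x i - ms i) - c * (m i - ms i)) ≤
      -(ε * (c * (wgt c ms m i * (Λ (Nat.dist i.1 (cnt m x)) * (m i - x))))) + ε * (|c| * η) := by
    intro i _
    change wgt c ms (somUpdate Λ ε m x) i * _ ≤ _
    have e1 : c * (somUpdate Λ ε m x i - ms i) - c * (m i - ms i) =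
        - (ε * (c * (Λ (Nat.dist i.1 (cnt m x)) * (m i - x)))) := by
      rw [hT]; ring
    rw [e1]
    set Y := Λ (Nat.dist i.1 (cnt m x)) * (m i - x)
    set w' := wgt c ms (somUpdate Λ ε m x) i
    set w := wgt c ms m i
    have h1 : -((w' - w) * (c * Y)) ≤ |c| * η := by
      refine (neg_le_abs _).trans ?_
      rw [abs_mul, abs_mul]
      have a1 := hw i
      have a2 := hY i
      calc |w' - w| * (|c| * |Y|) ≤ η * (|c| * 1) := by
            gcongr
            exact (abs_nonneg _).trans a1
        _ = _ := by ring
    have h2 := mul_le_mul_of_nonneg_left h1 hε.1.le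
    linarith
  have hs := Finset.sum_le_sum hterm
  rw [Finset.sum_add_distrib, Finset.sum_neg_distrib, ← Finset.mul_sum, ← Finset.mul_sum] at hs
  simp only [Finset.sum_const, Finset.card_univ, Fintype.card_fin, nsmul_eq_mul] at hs
  linarith

lemma HH_mu {n : ℕ} {Λ : ℕ → ℝ} (hΛ : ∀ k, Λ k ∈ Set.Icc (0 : ℝ) 1) {f : ℝ → ℝ}
    (hf : GoodDens f) (μ : Measure ℝ)
    (hμ : μ = volume.withDensity (fun x => ENNReal.ofReal (f x))) (m : Fin n → ℝ) (i : Fin n) :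
    Integrable (fun x => Λ (Nat.dist i.1 (cnt m x)) * (m i - x)) μ ∧
    ∫ x, Λ (Nat.dist i.1 (cnt m x)) * (m i - x) ∂μ = HH Λ f m i := by
  have hfm : Measurable (fun x => ENNReal.ofReal (f x)) := hf.meas.ennreal_ofReal
  have hlt : ∀ᵐ x : ℝ, ENNReal.ofReal (f x) < ∞ := ae_of_all _ fun x => ENNReal.ofReal_lt_top
  constructor
  · rw [hμ, integrable_withDensity_iff hfm hlt]
    refine (HH_int hΛ hf m i).congr (ae_of_all _ fun x => ?_)
    simp only [ENNReal.toReal_ofReal (hf.nonneg x)]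
  · rw [hμ, integral_withDensity_eq_integral_toReal_smul hfm hlt]
    unfold HH
    congr 1
    funext x
    rw [ENNReal.toReal_ofReal (hf.nonneg x), smul_eq_mul]
    ring

lemma mu_mem {f : ℝ → ℝ} (hf : GoodDens f) (μ : Measure ℝ)
    (hμ : μ = volume.withDensity (fun x => ENNReal.ofReal (f x))) :
    ∀ᵐ x ∂μ, x ∈ Set.Icc (0 : ℝ) 1 := by
  rw [hμ, ae_withDensity_iff hf.meas.ennreal_ofReal]
  refine ae_of_all _ fun x hx => ?_
  by_contra hc
  apply hx
  rw [hf.zero x (fun h => hc ⟨h.1.le, h.2.le⟩), ENNReal.ofReal_zero]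

lemma inv_step {n : ℕ} [NeZero n] {Λ : ℕ → ℝ} (hΛ : ∀ k, Λ k ∈ Set.Icc (0 : ℝ) 1) {f : ℝ → ℝ}
    (hf : GoodDens f) (μ : Measure ℝ) [IsProbabilityMeasure μ]
    (hμ : μ = volume.withDensity (fun x => ENNReal.ofReal (f x)))
    (ms : Fin n → ℝ) (c ε η : ℝ) (hε : ε ∈ Set.Ioo (0 : ℝ) 1)
    (hη : ∀ m T : Fin n → ℝ, (∀ i, m i ∈ Set.Icc (0 : ℝ) 1) → (∀ i, T i ∈ Set.Icc (0 : ℝ) 1) →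
      (∀ i, |T i - m i| ≤ ε) → ∀ i, |wgt c ms T i - wgt c ms m i| ≤ η)
    (ν : Measure (Fin n → ℝ)) [IsProbabilityMeasure ν] (hinv : IsSOMInvariant μ Λ ε ν)
    (hF : ∀ᵐ m ∂ν, m ∈ Fplus n) :
    ∫ m, c * ∑ i, wgt c ms m i * HH Λ f m i ∂ν ≤ |c| * (n * η) := by
  set φ : (Fin n → ℝ) → ℝ := fun m => Real.log (1 + ∑ i, Real.exp (c * (m i - ms i))) with hφ
  have hφ0 : ∀ m, 0 ≤ φ m := fun m => Real.log_nonneg (by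
    have : 0 ≤ ∑ i, Real.exp (c * (m i - ms i)) := by positivity
    linarith)
  have hφc : Continuous φ := by
    refine Continuous.log (by fun_prop) fun m => ?_
    positivity
  have hGc : Continuous (fun m => c * ∑ i, wgt c ms m i * HH Λ f m i) :=
    continuous_const.mul (continuous_finsetSum _ fun i _ => (wgt_cont c ms i).mul (HH_cont hΛ hf i))
  have hK : ∀ᵐ m ∂ν, m ∈ Kset n := hF.mono fun m hm => Fplus_sub n hm
  have hφi := int_of_cont ν hK hφc
  have hGi := int_of_cont ν hK hGc
  set R : (Fin n → ℝ) → ℝ := fun m =>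
    φ m - ε * (c * ∑ i, wgt c ms m i * HH Λ f m i) + ε * (|c| * (n * η)) with hR
  have hRi : Integrable R ν := (hφi.sub (hGi.const_mul ε)).add (integrable_const _)
  have hinner : ∀ m ∈ Fplus n, 0 ≤ R m ∧
      ∫⁻ x, ENNReal.ofReal (φ (somUpdate Λ ε m x)) ∂μ ≤ ENNReal.ofReal (R m) := by
    intro m hm
    set r : ℝ → ℝ := fun x => φ m
        - ε * (c * ∑ i, wgt c ms m i * (Λ (Nat.dist i.1 (cnt m x)) * (m i - x)))
        + ε * (|c| * (n * η)) with hr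
    have hsi : Integrable (fun x => ∑ i, wgt c ms m i * (Λ (Nat.dist i.1 (cnt m x)) * (m i - x))) μ :=
      integrable_finsetSum _ fun i _ => (HH_mu hΛ hf μ hμ m i).1.const_mul _
    have hri : Integrable r μ :=
      ((integrable_const _).sub ((hsi.const_mul c).const_mul ε)).add (integrable_const _)
    have hle : ∀ᵐ x ∂μ, φ (somUpdate Λ ε m x) ≤ r x := by
      filter_upwards [mu_mem hf μ hμ] with x hx
      exact pt_step hΛ ms c ε η hε hη hm hx
    have hr0 : 0 ≤ᵐ[μ] r := hle.mono fun x hx => (hφ0 _).trans hx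
    have hint : ∫ x, r x ∂μ = R m := by
      have hsub : Integrable (fun x => φ m - ε * (c * ∑ i, wgt c ms m i *
          (Λ (Nat.dist i.1 (cnt m x)) * (m i - x)))) μ :=
        (integrable_const _).sub ((hsi.const_mul c).const_mul ε)
      simp only [hr, hR]
      rw [integral_add hsub
        (integrable_const _), integral_sub (integrable_const _) ((hsi.const_mul c).const_mul ε),
        integral_const_mul, integral_const_mul,
        integral_finsetSum _ fun i _ => (HH_mu hΛ hf μ hμ m i).1.const_mul _]
      simp only [integral_const_mul, (HH_mu hΛ hf μ hμ m _).2, integral_const, probReal_univ,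
        one_smul]
    refine ⟨hint ▸ integral_nonneg_of_ae hr0, ?_⟩
    rw [← hint, ofReal_integral_eq_lintegral_ofReal hri hr0]
    exact lintegral_mono_ae (hle.mono fun x hx => ENNReal.ofReal_le_ofReal hx)
  have hR0 : 0 ≤ᵐ[ν] R := hF.mono fun m hm => (hinner m hm).1
  have hmain : ENNReal.ofReal (∫ m, φ m ∂ν) ≤ ENNReal.ofReal (∫ m, R m ∂ν) := by
    rw [ofReal_integral_eq_lintegral_ofReal hφi (ae_of_all _ hφ0),
      ofReal_integral_eq_lintegral_ofReal hRi hR0]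
    calc ∫⁻ m, ENNReal.ofReal (φ m) ∂ν
        = ∫⁻ m, ENNReal.ofReal (φ m) ∂(ν.bind (fun m => μ.map fun x => somUpdate Λ ε m x)) := by
          rw [show ν.bind (fun m => μ.map fun x => somUpdate Λ ε m x) = ν from hinv]
      _ ≤ ∫⁻ m, ∫⁻ y, ENNReal.ofReal (φ y) ∂(μ.map fun x => somUpdate Λ ε m x) ∂ν :=
          Measure.lintegral_bind_le _ _ _
      _ ≤ ∫⁻ m, ∫⁻ x, ENNReal.ofReal (φ (somUpdate Λ ε m x)) ∂μ ∂ν :=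
          lintegral_mono fun m => lintegral_map_le _ _
      _ ≤ _ := lintegral_mono_ae (hF.mono fun m hm => (hinner m hm).2)
  rw [ENNReal.ofReal_le_ofReal_iff (integral_nonneg_of_ae hR0)] at hmain
  have hRint : ∫ m, R m ∂ν = ∫ m, φ m ∂ν - ε * ∫ m, c * ∑ i, wgt c ms m i * HH Λ f m i ∂ν
      + ε * (|c| * (n * η)) := by
    have hsub : Integrable (fun m => φ m - ε * (c * ∑ i, wgt c ms m i * HH Λ f m i)) ν :=
      hφi.sub (hGi.const_mul ε)
    simp only [hR]
    rw [integral_add hsub (integrable_const _),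
      integral_sub hφi (hGi.const_mul ε), integral_const_mul]
    simp
  rw [hRint] at hmain
  have : ε * ∫ m, c * ∑ i, wgt c ms m i * HH Λ f m i ∂ν ≤ ε * (|c| * (n * η)) := by linarith
  exact le_of_mul_le_mul_left this hε.1

lemma wgt_unif {n : ℕ} (c : ℝ) (ms : Fin n → ℝ) {η : ℝ} (hη : 0 < η) : ∃ δ > 0, ∀ ε < δ,
    ∀ m T : Fin n → ℝ, (∀ i, m i ∈ Set.Icc (0 : ℝ) 1) → (∀ i, T i ∈ Set.Icc (0 : ℝ) 1) →
      (∀ i, |T i - m i| ≤ ε) → ∀ i, |wgt c ms T i - wgt c ms m i| ≤ η := by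
  have hc : Continuous (fun m => wgt c ms m) := continuous_pi fun i => wgt_cont c ms i
  have := (cube_compact n).uniformContinuousOn_of_continuous hc.continuousOn
  rw [Metric.uniformContinuousOn_iff] at this
  obtain ⟨δ, hδ, h⟩ := this η hη
  refine ⟨δ, hδ, fun ε hε m T hm hT hd i => ?_⟩
  have h1 : dist T m < δ := by
    rw [dist_pi_lt_iff hδ]
    intro i
    rw [Real.dist_eq]
    exact (hd i).trans_lt hε
  have h2 := h T hT m hm h1
  rw [dist_pi_lt_iff hη] at h2
  have := h2 i
  rw [Real.dist_eq] at this
  exact this.le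

lemma limit_dirac {n : ℕ} {Λ : ℕ → ℝ} (hΛ : ∀ k, Λ k ∈ Set.Icc (0 : ℝ) 1) (hanti : Antitone Λ)
    (hH : HLambda n Λ) {f : ℝ → ℝ} (hf : GoodDens f) {ms : Fin n → ℝ} (hms : ms ∈ Fplus n)
    (h0 : ∀ i, HH Λ f ms i = 0) (Q : Measure (Fin n → ℝ)) [IsProbabilityMeasure Q]
    (hK : ∀ᵐ m ∂Q, m ∈ Kset n)
    (hint : ∀ c : ℝ, ∫ m, c * ∑ i, wgt c ms m i * HH Λ f m i ∂Q ≤ 0) :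
    ∀ᵐ m ∂Q, m = ms := by
  have hup : ∀ᵐ m ∂Q, ∀ i, m i - ms i ≤ 0 := by
    refine limit_gen Q (fun i m => m i - ms i) (fun i m => HH Λ f m i) (fun i => by fun_prop)
      (fun i => int_of_cont Q hK (HH_cont hΛ hf i)) (Kset n) hK ?_ ?_ ?_
    · intro m hm M hM hle i hi
      exact lemA_nonneg hΛ hanti hf hms h0 hm.1 hM (fun j => by linarith [hle j]) (by linarith)
    · intro m hm M hM hle hz i hi
      exact lemA_strict hΛ hanti hH hf hms h0 hm.1 (fun j => (hm.2 j).2) hM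
        (fun j => by linarith [hle j]) (fun j hj => hz j (by linarith)) i (by linarith)
    · intro β hβ
      have := hint β
      rw [integral_const_mul] at this
      have hb : (0 : ℝ) < β := by exact_mod_cast hβ
      exact nonpos_of_mul_nonpos_right this hb
  have hdn : ∀ᵐ m ∂Q, ∀ i, ms i - m i ≤ 0 := by
    refine limit_gen Q (fun i m => ms i - m i) (fun i m => - HH Λ f m i) (fun i => by fun_prop)
      (fun i => (int_of_cont Q hK (HH_cont hΛ hf i)).neg) (Kset n) hK ?_ ?_ ?_
    · intro m hm M hM hle i hi
      have := lemB_nonpos hΛ hanti hf hms h0 hm.1 hM (fun j => by linarith [hle j])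
        (i := i) (by linarith)
      linarith
    · intro m hm M hM hle hz i hi
      exact lemB_strict hΛ hanti hH hf hms h0 hm.1 (fun j => (hm.2 j).1) hM
        (fun j => by linarith [hle j]) (fun j hj => neg_eq_zero.1 (hz j (by linarith))) i
        (by linarith)
    · intro β hβ
      have := hint (-β)
      rw [integral_const_mul] at this
      have hb : (0 : ℝ) < β := by exact_mod_cast hβ
      have h1 : 0 ≤ ∫ m, ∑ i, wgt (-(β : ℝ)) ms m i * HH Λ f m i ∂Q := by
        by_contra hc
        push Not at hc
        nlinarith
      have e : ∀ m : Fin n → ℝ, ∑ i, Real.exp (β * (ms i - m i)) /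
          (1 + ∑ j, Real.exp (β * (ms j - m j))) * (- HH Λ f m i) =
          - ∑ i, wgt (-(β : ℝ)) ms m i * HH Λ f m i := by
        intro m
        have e1 : ∀ j, -(β : ℝ) * (m j - ms j) = β * (ms j - m j) := fun j => by ring
        simp only [wgt, e1, mul_neg, Finset.sum_neg_distrib]
      simp only [e]
      rw [integral_neg]
      linarith
  filter_upwards [hup, hdn] with m h1 h2
  funext i
  linarith [h1 i, h2 i]

def clip {n : ℕ} (m : Fin n → ℝ) : Fin n → ℝ := fun i => max 0 (min 1 (m i))

lemma clip_cont {n : ℕ} : Continuous (clip (n := n)) := by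
  unfold clip
  fun_prop

lemma clip_eq {n : ℕ} {m : Fin n → ℝ} (hm : m ∈ Kset n) : clip m = m := by
  funext i
  have := hm.2 i
  simp [clip, this.1, this.2]

lemma clip_mem {n : ℕ} (m : Fin n → ℝ) : ∀ i, clip m i ∈ Set.Icc (0 : ℝ) 1 :=
  fun i => ⟨le_max_left _ _, max_le zero_le_one (min_le_left _ _)⟩

lemma int_tendsto {n : ℕ} {ι : Type*} {L : Filter ι} {P : ι → ProbabilityMeasure (Fin n → ℝ)}
    {Q : ProbabilityMeasure (Fin n → ℝ)} (h : Tendsto P L (𝓝 Q))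
    (hP : ∀ᶠ a in L, ∀ᵐ m ∂(P a : Measure (Fin n → ℝ)), m ∈ Kset n)
    (hQ : ∀ᵐ m ∂(Q : Measure (Fin n → ℝ)), m ∈ Kset n)
    {G : (Fin n → ℝ) → ℝ} (hG : Continuous G) :
    Tendsto (fun a => ∫ m, G m ∂(P a : Measure (Fin n → ℝ))) L
      (𝓝 (∫ m, G m ∂(Q : Measure (Fin n → ℝ)))) := by
  obtain ⟨C, hC⟩ := (cube_compact n).exists_bound_of_continuousOn hG.continuousOn
  have hGc : Continuous (fun m => G (clip m)) := hG.comp clip_cont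
  have key := (ProbabilityMeasure.tendsto_iff_forall_integral_tendsto.1 h)
    (BoundedContinuousFunction.ofNormedAddCommGroup (fun m => G (clip m)) hGc C
      (fun m => hC _ (clip_mem m)))
  have e : ∀ ρ : Measure (Fin n → ℝ), (∀ᵐ m ∂ρ, m ∈ Kset n) →
      ∫ m, (BoundedContinuousFunction.ofNormedAddCommGroup (fun m => G (clip m)) hGc C
      (fun m => hC _ (clip_mem m))) m ∂ρ = ∫ m, G m ∂ρ := by
    intro ρ hR
    refine integral_congr_ae (hR.mono fun m hm => ?_)
    change G (clip m) = G m
    rw [clip_eq hm]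
  rw [e _ hQ] at key
  exact key.congr' (hP.mono fun a ha => e _ ha)

lemma exists_limit {n : ℕ} {ι : Type*} (U : Ultrafilter ι)
    (P : ι → ProbabilityMeasure (Fin n → ℝ))
    (hP : ∀ a, ∀ᵐ m ∂(P a : Measure (Fin n → ℝ)), m ∈ Kset n) :
    ∃ Q : ProbabilityMeasure (Fin n → ℝ), Tendsto P U (𝓝 Q) ∧
      ∀ᵐ m ∂(Q : Measure (Fin n → ℝ)), m ∈ Kset n := by
  have hc : IsCompact (closure (Set.range P)) := by
    apply isCompact_closure_of_isTightMeasureSet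
    rw [isTightMeasureSet_iff_exists_isCompact_measure_compl_le]
    intro ε _
    refine ⟨Kset n, Kset_compact n, ?_⟩
    rintro _ ⟨_, ⟨a, rfl⟩, rfl⟩
    have : (P a : Measure (Fin n → ℝ)) (Kset n)ᶜ = 0 := mem_ae_iff.1 (hP a)
    rw [this]
    exact zero_le
  obtain ⟨Q, -, hQ⟩ := hc.ultrafilter_le_nhds (U.map P) (by
    rw [Ultrafilter.coe_map, le_principal_iff]
    exact Filter.mem_map.2 (Filter.univ_mem' fun a => subset_closure ⟨a, rfl⟩))
  have hQ' : Tendsto P U (𝓝 Q) := hQ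
  refine ⟨Q, hQ', ?_⟩
  have h1 := ProbabilityMeasure.limsup_measure_closed_le_of_tendsto hQ' (Kset_closed n)
  have h2 : ∀ a, (P a : Measure (Fin n → ℝ)) (Kset n) = 1 := fun a =>
    (mem_ae_iff_prob_eq_one (Kset_closed n).measurableSet).1 (hP a)
  simp only [h2, limsup_const] at h1
  exact (mem_ae_iff_prob_eq_one (Kset_closed n).measurableSet).2 (le_antisymm prob_le_one h1)

/-- Under `H_Λ` and `H_μ`, invariant probability measures
`ν^ε` carried by `F_n^+` converge weakly to the Dirac mass at the unique zero
`m★` of the mean field as `ε → 0⁺`. -/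
theorem som_invariant_measures_tendsto_dirac {n : ℕ} [NeZero n] (hn : 2 ≤ n)
    (Λ : ℕ → ℝ) (hΛanti : Antitone Λ) (hΛ0 : Λ 0 = 1)
    (hΛrange : ∀ k, Λ k ∈ Set.Icc (0 : ℝ) 1) (hHΛ : HLambda n Λ)
    (μ : Measure ℝ) [IsProbabilityMeasure μ] (f : ℝ → ℝ)
    (hdens : μ = volume.withDensity fun x => ENNReal.ofReal (f x))
    (hsupp : ∀ x, x ∉ Set.Icc (0 : ℝ) 1 → f x = 0)
    (hHμ : Hmu f)
    (mstar : Fin n → ℝ) (hmstarF : mstar ∈ Fplus n)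
    (hmstarzero : meanField Λ f mstar = 0)
    (hmstaruniq : ∀ m ∈ Fplus n, meanField Λ f m = 0 → m = mstar)
    (ν : ℝ → Measure (Fin n → ℝ))
    (hν : ∀ ε ∈ Set.Ioo (0 : ℝ) 1, IsProbabilityMeasure (ν ε) ∧
      IsSOMInvariant μ Λ ε (ν ε) ∧ ν ε (Fplus n) = 1) :
    ∀ g : BoundedContinuousFunction (Fin n → ℝ) ℝ,
      Tendsto (fun ε => ∫ m, g m ∂(ν ε)) (nhdsWithin 0 (Set.Ioi 0))
        (nhds (g mstar)) := by
  obtain ⟨f0, hf, hae, hμ⟩ := goodDens_of hHμ μ hdens hsupp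
  have h0 : ∀ i, HH Λ f0 mstar i = 0 := fun i => by
    rw [← meanField_eq hΛrange hf hae hmstarF i, hmstarzero]
    rfl
  intro g
  rw [tendsto_iff_ultrafilter]
  intro U hU
  have hIoo : ∀ᶠ ε in (U : Filter ℝ), ε ∈ Set.Ioo (0 : ℝ) 1 := hU (Ioo_mem_nhdsGT one_pos)
  let P : ℝ → ProbabilityMeasure (Fin n → ℝ) := fun ε =>
    if h : ε ∈ Set.Ioo (0 : ℝ) 1 then ⟨ν ε, (hν ε h).1⟩
    else ⟨Measure.dirac mstar, Measure.dirac.isProbabilityMeasure⟩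
  have hPν : ∀ ε ∈ Set.Ioo (0 : ℝ) 1, (P ε : Measure (Fin n → ℝ)) = ν ε := by
    intro ε h
    have e : P ε = ⟨ν ε, (hν ε h).1⟩ := dif_pos h
    rw [e]
    rfl
  have hF : ∀ ε ∈ Set.Ioo (0 : ℝ) 1, ∀ᵐ m ∂(ν ε), m ∈ Fplus n := by
    intro ε h
    have := (hν ε h).1
    exact (mem_ae_iff_prob_eq_one (Fplus_meas n)).2 (hν ε h).2.2
  have hPK : ∀ ε, ∀ᵐ m ∂(P ε : Measure (Fin n → ℝ)), m ∈ Kset n := by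
    intro ε
    by_cases h : ε ∈ Set.Ioo (0 : ℝ) 1
    · rw [hPν ε h]
      exact (hF ε h).mono fun m hm => Fplus_sub n hm
    · have e : (P ε : Measure (Fin n → ℝ)) = Measure.dirac mstar := by
        have e' : P ε = ⟨Measure.dirac mstar, Measure.dirac.isProbabilityMeasure⟩ := dif_neg h
        rw [e']
        rfl
      rw [e, ae_dirac_eq]
      exact Fplus_sub n hmstarF
  obtain ⟨Q, hPQ, hQK⟩ := exists_limit U P hPK
  have hint : ∀ c : ℝ, ∫ m, c * ∑ i, wgt c mstar m i * HH Λ f0 m i ∂(Q : Measure (Fin n → ℝ)) ≤ 0 := by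
    intro c
    have hGc : Continuous (fun m => c * ∑ i, wgt c mstar m i * HH Λ f0 m i) :=
      continuous_const.mul (continuous_finsetSum _ fun i _ =>
        (wgt_cont c mstar i).mul (HH_cont hΛrange hf i))
    have ht := int_tendsto hPQ (Filter.Eventually.of_forall hPK) hQK hGc
    have hb : ∀ η > 0, ∫ m, c * ∑ i, wgt c mstar m i * HH Λ f0 m i
        ∂(Q : Measure (Fin n → ℝ)) ≤ |c| * (n * η) := by
      intro η hη
      obtain ⟨δ, hδ, hw⟩ := wgt_unif c mstar hη
      have hδU : ∀ᶠ ε in (U : Filter ℝ), ε ∈ Set.Ioo (0 : ℝ) δ := hU (Ioo_mem_nhdsGT hδ)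
      refine le_of_tendsto ht ?_
      filter_upwards [hIoo, hδU] with ε h1 h2
      have := (hν ε h1).1
      rw [hPν ε h1]
      exact inv_step hΛrange hf μ hμ mstar c ε η h1 (hw ε h2.2) (ν ε) (hν ε h1).2.1 (hF ε h1)
    have hlim : Tendsto (fun η : ℝ => |c| * (n * η)) (𝓝[>] 0) (𝓝 0) := by
      have : Continuous (fun η : ℝ => |c| * (n * η)) := by fun_prop
      have h := this.tendsto 0
      simp only [mul_zero] at h
      exact h.mono_left nhdsWithin_le_nhds
    exact ge_of_tendsto hlim (eventually_mem_nhdsWithin.mono fun η hη => hb η hη)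
  have hdir := limit_dirac hΛrange hΛanti hHΛ hf hmstarF h0 (Q : Measure (Fin n → ℝ)) hQK hint
  have hgQ : ∫ m, g m ∂(Q : Measure (Fin n → ℝ)) = g mstar := by
    rw [integral_congr_ae (hdir.mono fun m hm => by rw [hm] : (fun m => g m) =ᵐ[(Q : Measure (Fin n → ℝ))] fun _ => g mstar)]
    simp
  have ht := int_tendsto hPQ (Filter.Eventually.of_forall hPK) hQK g.continuous
  rw [hgQ] at ht
  exact ht.congr' (hIoo.mono fun ε h => by simp only [hPν ε h])

end
end

section
/- Let d = 1 and let μ be a probability measure on [0,1] satisfying hypothesis H_μ with density f. Then the map m ↦ (∫_{C_i(m)} (m_i − x) f(x) dx)_{1≤i≤n}, which is the gradient of the distortion V_n on F_n^+, has a unique zero m★_n in F_n^+; this point is a minimum of V_n, i.e. V_n(m★_n) = inf{V_n(m) : m ∈ F_n^+}. -/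
open MeasureTheory Set Filter Topology
open scoped Classical ENNReal

noncomputable section

/-- The one-dimensional distortion `V_n(m) = (1/2) ∫ min_i |m_i - x|² dμ(x)`. -/
def distortion1 {n : ℕ} (μ : Measure ℝ) (m : Fin n → ℝ) : ℝ :=
  (1 / 2) * ∫ x, (⨅ i, |m i - x| ^ 2) ∂μ

/-- The `i`-th component of the gradient of the distortion on `F_n^+` :
`∫_{C_i(m)} (m_i - x) f(x) dx`. -/
def gradV {n : ℕ} (f : ℝ → ℝ) (m : Fin n → ℝ) (i : Fin n) : ℝ :=
  ∫ x in Set.Icc (somBnd m i.1) (somBnd m (i.1 + 1)), (m i - x) * f x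

lemma aux_K (f : ℝ → ℝ) (hf : Integrable f) (fpos : ∀ x ∈ Set.Ioo (0:ℝ) 1, 0 < f x)
    (LC : ∀ y m h : ℝ, 0 < y → y ≤ m → 0 ≤ h → m + h < 1 → f (m + h) * f y ≤ f (y + h) * f m)
    {a b a' b' m h : ℝ} (ha : 0 ≤ a) (ham : a < m) (hmb : m < b) (hb : b ≤ 1)
    (ha' : 0 ≤ a') (hb' : b' ≤ 1) (hh : 0 ≤ h) (haa : a' ≤ a + h) (hbb : b' < b + h)
    (hmb' : m + h < b') (h0 : ∫ x in a..b, (m - x) * f x = 0) :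
    0 < ∫ x in a'..b', (m + h - x) * f x := by
  have hint : ∀ (c u v : ℝ), IntervalIntegrable (fun x => (c - x) * f x) volume u v := fun c u v =>
    (hf.intervalIntegrable).continuousOn_mul (by fun_prop)
  have hint2 : ∀ (c u v : ℝ), IntervalIntegrable (fun x => (c - x) * f (x + h)) volume u v :=
    fun c u v => ((hf.comp_add_right h).intervalIntegrable).continuousOn_mul (by fun_prop)
  have fm : 0 < f m := fpos m ⟨by linarith, by linarith⟩
  have fmh : 0 < f (m + h) := fpos _ ⟨by linarith, by linarith⟩
  rw [← intervalIntegral.integral_add_adjacent_intervals (hint (m+h) a' (a+h)) (hint (m+h) (a+h) b')]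
  have h1 : 0 ≤ ∫ x in a'..(a+h), (m + h - x) * f x := by
    have := intervalIntegral.integral_mono_on_of_le_Ioo (f := fun _ => (0:ℝ)) haa
      (by simp) (hint (m+h) a' (a+h)) (by
        intro x hx
        have := fpos x ⟨by linarith [hx.1], by linarith [hx.2]⟩
        exact mul_nonneg (by linarith [hx.2]) this.le)
    simpa using this
  have h2 : ∫ x in (a+h)..b', (m + h - x) * f x = ∫ y in a..(b'-h), (m - y) * f (y + h) := by
    have := intervalIntegral.integral_comp_add_right (a := a) (b := b' - h)
      (fun x => (m + h - x) * f x) h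
    simp only [sub_add_cancel] at this
    rw [← this]
    congr 1
    ext y
    ring
  have h3 : f (m+h) * ∫ y in a..(b'-h), (m - y) * f y ≤ f m * ∫ y in a..(b'-h), (m - y) * f (y + h) := by
    rw [← intervalIntegral.integral_const_mul, ← intervalIntegral.integral_const_mul]
    refine intervalIntegral.integral_mono_on_of_le_Ioo (by linarith) ((hint m _ _).const_mul _)
      ((hint2 m _ _).const_mul _) ?_
    intro y hy
    rcases le_total y m with hym | hym
    · have := LC y m h (by linarith [hy.1]) hym hh (by linarith)
      nlinarith
    · have := LC m y h (by linarith) hym hh (by linarith [hy.2])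
      nlinarith
  have h4 : 0 < ∫ y in (b'-h)..b, (y - m) * f y := by
    refine intervalIntegral.intervalIntegral_pos_of_pos_on ?_ ?_ (by linarith)
    · exact (hf.intervalIntegrable).continuousOn_mul (by fun_prop)
    · intro x hx
      have := fpos x ⟨by linarith [hx.1], by linarith [hx.2]⟩
      exact mul_pos (by linarith [hx.1]) this
  have h5 : ∫ y in (b'-h)..b, (m - y) * f y = - ∫ y in (b'-h)..b, (y - m) * f y := by
    rw [← intervalIntegral.integral_neg]
    congr 1
    ext y
    ring
  have h6 := intervalIntegral.integral_add_adjacent_intervals (hint m a (b'-h)) (hint m (b'-h) b)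
  have h7 : 0 < ∫ y in a..(b'-h), (m - y) * f y := by linarith
  have h8 : 0 < f m * ∫ y in a..(b'-h), (m - y) * f (y + h) := lt_of_lt_of_le (mul_pos fmh h7) h3
  have h9 := pos_of_mul_pos_right h8 fm.le
  rw [h2]
  linarith

lemma aux_LC (f : ℝ → ℝ) (fpos : ∀ x ∈ Set.Ioo (0:ℝ) 1, 0 < f x)
    (hc : ConcaveOn ℝ (Set.Ioo (0 : ℝ) 1) (fun x => Real.log (f x))) :
    ∀ y m h : ℝ, 0 < y → y ≤ m → 0 ≤ h → m + h < 1 → f (m + h) * f y ≤ f (y + h) * f m := by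
  intro y m h hy hym hh hmh
  have p1 := fpos y ⟨by linarith, by linarith⟩
  have p2 := fpos m ⟨by linarith, by linarith⟩
  have p3 := fpos (y+h) ⟨by linarith, by linarith⟩
  have p4 := fpos (m+h) ⟨by linarith, by linarith⟩
  rcases eq_or_lt_of_le (show 0 ≤ m - y + h by linarith) with h0 | h0
  · have e1 : m = y := by linarith
    have e2 : h = 0 := by linarith
    subst e1 e2
    simp
  have hy' : y ∈ Set.Ioo (0:ℝ) 1 := ⟨by linarith, by linarith⟩
  have hm' : m + h ∈ Set.Ioo (0:ℝ) 1 := ⟨by linarith, by linarith⟩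
  have hs : (m - y)/(m - y + h) + h/(m-y+h) = 1 := by field_simp
  have s1 : 0 ≤ (m - y)/(m - y + h) := div_nonneg (by linarith) h0.le
  have s2 : 0 ≤ h/(m - y + h) := div_nonneg (by linarith) h0.le
  have c1 := hc.2 hy' hm' s1 s2 hs
  have c2 := hc.2 hy' hm' s2 s1 (by linarith)
  have e1 : (m - y)/(m - y + h) * y + h/(m-y+h) * (m + h) = y + h := by
    field_simp; ring
  have e2 : h/(m - y + h) * y + (m-y)/(m-y+h) * (m + h) = m := by
    field_simp; ring
  simp only [smul_eq_mul] at c1 c2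
  rw [e1] at c1
  rw [e2] at c2
  have : Real.log (f (m+h) * f y) ≤ Real.log (f (y+h) * f m) := by
    rw [Real.log_mul p4.ne' p1.ne', Real.log_mul p3.ne' p2.ne']
    clear e1 e2
    generalize (m - y)/(m - y + h) = s at *
    generalize h/(m - y + h) = t at *
    have es : s = 1 - t := by linarith
    subst es
    linarith
  exact (Real.log_le_log_iff (by positivity) (by positivity)).1 this

lemma bnd_zero {n : ℕ} (m : Fin n → ℝ) : somBnd m 0 = 0 := by simp [somBnd]

lemma bnd_last {n : ℕ} (hn : 1 ≤ n) (m : Fin n → ℝ) : somBnd m n = 1 := by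
  have : n ≠ 0 := by omega
  simp [somBnd, this]

lemma bnd_succ {n : ℕ} (m : Fin n → ℝ) (i : ℕ) (h : i + 1 < n) :
    somBnd m (i+1) = (m ⟨i, by omega⟩ + m ⟨i+1, h⟩) / 2 := by
  simp [somBnd, h]

lemma bnd_mem {n : ℕ} (m : Fin n → ℝ) (h01 : ∀ i, m i ∈ Set.Icc (0:ℝ) 1) (j : ℕ) :
    somBnd m j ∈ Set.Icc (0:ℝ) 1 := by
  unfold somBnd
  split_ifs with h1 h2
  · simp
  · have a := h01 ⟨j - 1, lt_of_le_of_lt (Nat.sub_le j 1) h2⟩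
    have b := h01 ⟨j, h2⟩
    exact ⟨by linarith [a.1, b.1], by linarith [a.2, b.2]⟩
  · simp

lemma bnd_lt_left {n : ℕ} (m : Fin n → ℝ) (hm : m ∈ Fplus n) (i : Fin n) :
    somBnd m i.1 < m i := by
  obtain ⟨i, hi⟩ := i
  rcases i with _ | i
  · simpa [bnd_zero] using (hm.2 ⟨0, hi⟩).1
  · rw [bnd_succ m i hi]
    have : m ⟨i, by omega⟩ < m ⟨i+1, hi⟩ := hm.1 (by simp)
    linarith

lemma bnd_lt_right {n : ℕ} (m : Fin n → ℝ) (hm : m ∈ Fplus n) (i : Fin n) :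
    m i < somBnd m (i.1 + 1) := by
  obtain ⟨i, hi⟩ := i
  rcases Nat.lt_or_ge (i+1) n with h | h
  · have : m ⟨i, by omega⟩ < m ⟨i+1, h⟩ := hm.1 (by simp)
    rw [bnd_succ m i h]
    linarith
  · have : i + 1 = n := by omega
    simp only [this]
    rw [bnd_last (by omega)]
    exact (hm.2 _).2

lemma bnd_lt {n : ℕ} (m : Fin n → ℝ) (hm : StrictMono m) (h01 : ∀ i, m i ∈ Set.Icc (0:ℝ) 1)
    (i : Fin n) : somBnd m i.1 < somBnd m (i.1 + 1) := by
  obtain ⟨i, hi⟩ := i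
  have key : somBnd m i ≤ m ⟨i, hi⟩ ∧ (0 < i → somBnd m i < m ⟨i, hi⟩) := by
    rcases i with _ | i
    · simpa [bnd_zero] using (h01 ⟨0, hi⟩).1
    · rw [bnd_succ m i hi]
      have : m ⟨i, by omega⟩ < m ⟨i+1, hi⟩ := hm (by simp)
      exact ⟨by linarith, fun _ => by linarith⟩
  rcases Nat.lt_or_ge (i+1) n with h | h
  · have : m ⟨i, by omega⟩ < m ⟨i+1, h⟩ := hm (by simp)
    simp only
    rw [bnd_succ m i h]
    linarith [key.1]
  · have : i + 1 = n := by omega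
    simp only [this]
    rw [bnd_last (by omega)]
    rcases Nat.eq_zero_or_pos i with h0 | h0
    · subst h0; simp [bnd_zero]
    · linarith [key.2 h0, (h01 ⟨i, hi⟩).2]

lemma gradV_eq {n : ℕ} (f : ℝ → ℝ) (m : Fin n → ℝ) (i : Fin n)
    (h : somBnd m i.1 ≤ somBnd m (i.1+1)) :
    gradV f m i = ∫ x in (somBnd m i.1)..(somBnd m (i.1 + 1)), (m i - x) * f x := by
  rw [gradV, integral_Icc_eq_integral_Ioc, intervalIntegral.integral_of_le h]

lemma uniq_aux {n : ℕ} (hn : 1 ≤ n) (f : ℝ → ℝ) (hf : Integrable f)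
    (fpos : ∀ x ∈ Set.Ioo (0:ℝ) 1, 0 < f x)
    (LC : ∀ y m h : ℝ, 0 < y → y ≤ m → 0 ≤ h → m + h < 1 → f (m + h) * f y ≤ f (y + h) * f m)
    (m m' : Fin n → ℝ) (hm : m ∈ Fplus n) (hm' : m' ∈ Fplus n)
    (hz : ∀ i, gradV f m i = 0) (hz' : ∀ i, gradV f m' i = 0)
    (hd : m ⟨0, hn⟩ ≤ m' ⟨0, hn⟩) : m = m' := by
  have I1 : ∀ i, m i ∈ Set.Icc (0:ℝ) 1 := fun i => Ioo_subset_Icc_self (hm.2 i)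
  have I2 : ∀ i, m' i ∈ Set.Icc (0:ℝ) 1 := fun i => Ioo_subset_Icc_self (hm'.2 i)
  have step : ∀ i : Fin n, 0 ≤ m' i - m i → somBnd m' i.1 - somBnd m i.1 ≤ m' i - m i →
      m' i - m i ≤ somBnd m' (i.1+1) - somBnd m (i.1+1) := by
    intro i h1 h2
    by_contra hcon
    push Not at hcon
    have z := hz i
    have z' := hz' i
    have l1 := bnd_lt_left m hm i
    have l2 := bnd_lt_right m hm i
    have l1' := bnd_lt_left m' hm' i
    have l2' := bnd_lt_right m' hm' i
    rw [gradV_eq f m i (by linarith)] at z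
    rw [gradV_eq f m' i (by linarith)] at z'
    have := aux_K f hf fpos LC (a' := somBnd m' i.1) (b' := somBnd m' (i.1+1)) (h := m' i - m i)
      (bnd_mem m I1 _).1 l1 l2 (bnd_mem m I1 _).2
      (bnd_mem m' I2 _).1 (bnd_mem m' I2 _).2 h1 (by linarith) (by linarith) (by linarith) z
    simp only [add_sub_cancel] at this
    linarith
  have P : ∀ i : ℕ, ∀ h : i < n, 0 ≤ m' ⟨i, h⟩ - m ⟨i, h⟩ ∧
      somBnd m' i - somBnd m i ≤ m' ⟨i, h⟩ - m ⟨i, h⟩ := by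
    intro i
    induction i with
    | zero => intro h; rw [bnd_zero, bnd_zero]; constructor <;> linarith
    | succ i ih =>
      intro h
      obtain ⟨a, b⟩ := ih (by omega)
      have := step ⟨i, by omega⟩ a b
      simp only at this
      rw [bnd_succ m i h, bnd_succ m' i h] at *
      constructor <;> linarith
  have Q : ∀ k i : ℕ, ∀ h : i < n, n = i + 1 + k → m' ⟨i, h⟩ - m ⟨i, h⟩ ≤ 0 := by
    intro k
    induction k with
    | zero =>
      intro i h hk
      have := step ⟨i, h⟩ (P i h).1 (P i h).2
      have e : i + 1 = n := by omega
      simp only [e] at this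
      rw [bnd_last hn, bnd_last hn] at this
      linarith
    | succ k ih =>
      intro i h hk
      have := step ⟨i, h⟩ (P i h).1 (P i h).2
      have h2 := ih (i+1) (by omega) (by omega)
      simp only at this
      rw [bnd_succ m i (by omega), bnd_succ m' i (by omega)] at this
      linarith
  ext i
  have a := (P i.1 i.2).1
  have b := Q (n - (i.1+1)) i.1 i.2 (by omega)
  simp only [Fin.eta] at a b
  linarith

/-- minimum distance function -/
def gmin {n : ℕ} (m : Fin n → ℝ) (x : ℝ) : ℝ := ⨅ i, |m i - x| ^ 2

lemma gmin_le {n : ℕ} (m : Fin n → ℝ) (x : ℝ) (i : Fin n) : gmin m x ≤ |m i - x| ^ 2 :=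
  ciInf_le (Set.finite_range _).bddBelow i

lemma gmin_nonneg {n : ℕ} (m : Fin n → ℝ) (x : ℝ) : 0 ≤ gmin m x :=
  Real.iInf_nonneg fun i => by positivity

lemma le_gmin {n : ℕ} (hn : 1 ≤ n) (m : Fin n → ℝ) (x c : ℝ) (h : ∀ i, c ≤ |m i - x| ^ 2) :
    c ≤ gmin m x := by
  haveI : Nonempty (Fin n) := ⟨⟨0, hn⟩⟩
  exact le_ciInf h

lemma gmin_cont {n : ℕ} (hn : 1 ≤ n) : Continuous fun p : (Fin n → ℝ) × ℝ => gmin p.1 p.2 := by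
  haveI : Nonempty (Fin n) := ⟨⟨0, hn⟩⟩
  have : (fun p : (Fin n → ℝ) × ℝ => gmin p.1 p.2) =
      fun p => Finset.univ.inf' Finset.univ_nonempty (fun i => |p.1 i - p.2| ^ 2) := by
    ext p
    rw [gmin, Finset.inf'_univ_eq_ciInf]
  rw [this]
  apply Continuous.finset_inf'_apply
  intro i _
  fun_prop

lemma gmin_cont2 {n : ℕ} (hn : 1 ≤ n) (m : Fin n → ℝ) : Continuous fun x => gmin m x := by
  have h : Continuous fun x : ℝ => (m, x) := by fun_prop
  have h2 := (gmin_cont hn).comp h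
  exact h2

lemma gmin_le_one {n : ℕ} (hn : 1 ≤ n) (m : Fin n → ℝ) (h01 : ∀ i, m i ∈ Set.Icc (0:ℝ) 1) (x : ℝ)
    (hx : x ∈ Set.Icc (0:ℝ) 1) : gmin m x ≤ 1 := by
  refine (gmin_le m x ⟨0, hn⟩).trans ?_
  have := h01 ⟨0, hn⟩
  rw [sq_abs]
  nlinarith [this.1, this.2, hx.1, hx.2]

lemma gmin_int {n : ℕ} (hn : 1 ≤ n) (μ : Measure ℝ) [IsProbabilityMeasure μ]
    (hs : ∀ᵐ x ∂μ, x ∈ Set.Icc (0:ℝ) 1) (m : Fin n → ℝ) (h01 : ∀ i, m i ∈ Set.Icc (0:ℝ) 1) :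
    Integrable (gmin m) μ := by
  refine Integrable.of_bound (C := 1) ?_ ?_
  · exact ((gmin_cont hn).comp (Continuous.prodMk_right m)).aestronglyMeasurable
  · filter_upwards [hs] with x hx
    rw [Real.norm_of_nonneg (gmin_nonneg _ _)]
    exact gmin_le_one hn m h01 x hx

lemma exists_min {n : ℕ} (hn : 1 ≤ n) (μ : Measure ℝ) [IsProbabilityMeasure μ]
    (hs : ∀ᵐ x ∂μ, x ∈ Set.Icc (0:ℝ) 1) :
    ∃ m : Fin n → ℝ, (∀ i, m i ∈ Set.Icc (0:ℝ) 1) ∧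
      ∀ m' : Fin n → ℝ, (∀ i, m' i ∈ Set.Icc (0:ℝ) 1) →
        ∫ x, gmin m x ∂μ ≤ ∫ x, gmin m' x ∂μ := by
  have hK : IsCompact (Set.univ.pi fun _ : Fin n => Set.Icc (0:ℝ) 1) :=
    isCompact_univ_pi fun _ => isCompact_Icc
  have hne : (Set.univ.pi fun _ : Fin n => Set.Icc (0:ℝ) 1).Nonempty := ⟨fun _ => 0, fun _ _ => by simp⟩
  have hc : ContinuousOn (fun m : Fin n → ℝ => ∫ x, gmin m x ∂μ)
      (Set.univ.pi fun _ : Fin n => Set.Icc (0:ℝ) 1) := by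
    refine continuousOn_of_dominated (bound := fun _ => 1) ?_ ?_ (integrable_const _) ?_
    · intro m hm
      exact ((gmin_cont hn).comp (Continuous.prodMk_right m)).aestronglyMeasurable
    · intro m hm
      filter_upwards [hs] with x hx
      rw [Real.norm_of_nonneg (gmin_nonneg _ _)]
      exact gmin_le_one hn m (fun i => hm i trivial) x hx
    · filter_upwards with x
      exact ((gmin_cont hn).comp (Continuous.prodMk_left x)).continuousOn
  obtain ⟨m, hm, hmin⟩ := hK.exists_isMinOn hne hc
  exact ⟨m, fun i => hm i trivial, fun m' h' => hmin (fun i _ => h' i)⟩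

lemma min_inj {n : ℕ} (hn : 1 ≤ n) (μ : Measure ℝ) [IsProbabilityMeasure μ]
    (hs : ∀ᵐ x ∂μ, x ∈ Set.Icc (0:ℝ) 1)
    (hpos : ∀ a b : ℝ, 0 ≤ a → a < b → b ≤ 1 → 0 < μ (Set.Ioo a b))
    (m : Fin n → ℝ) (h01 : ∀ i, m i ∈ Set.Icc (0:ℝ) 1)
    (hmin : ∀ m' : Fin n → ℝ, (∀ i, m' i ∈ Set.Icc (0:ℝ) 1) →
        ∫ x, gmin m x ∂μ ≤ ∫ x, gmin m' x ∂μ) : Function.Injective m := by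
  intro i j hij
  by_contra hne
  obtain ⟨p, hp, hpm⟩ : ∃ p ∈ Set.Ioo (0:ℝ) 1, p ∉ Set.range m :=
    (Set.Ioo_infinite one_pos).exists_notMem_finite (Set.finite_range m)
  obtain ⟨m', hmj, hmk⟩ : ∃ m' : Fin n → ℝ, m' j = p ∧ ∀ k, k ≠ j → m' k = m k :=
    ⟨Function.update m j p, by simp, fun k hk => by simp [hk]⟩
  have h01' : ∀ i, m' i ∈ Set.Icc (0:ℝ) 1 := by
    intro k
    by_cases hk : k = j
    · rw [hk, hmj]; exact Ioo_subset_Icc_self hp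
    · rw [hmk k hk]; exact h01 k
  have hle : ∀ x, gmin m' x ≤ gmin m x := by
    intro x
    apply le_gmin hn
    intro k
    by_cases hk : k = j
    · have := gmin_le m' x i
      rw [hmk i hne] at this
      rw [hk, ← hij]
      exact this
    · have := gmin_le m' x k
      rwa [hmk k hk] at this
  have hcm : Continuous (gmin m) := gmin_cont2 hn m
  have hcm' : Continuous (gmin m') := gmin_cont2 hn m'
  have hI := hmin m' h01'
  have hae : (fun x => gmin m x - gmin m' x) =ᵐ[μ] 0 := by
    rw [← integral_eq_zero_iff_of_nonneg]
    · refine le_antisymm ?_ (integral_nonneg fun x => sub_nonneg.2 (hle x))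
      rw [integral_sub (gmin_int hn μ hs m h01) (gmin_int hn μ hs m' h01')]
      linarith
    · exact fun x => sub_nonneg.2 (hle x)
    · exact (gmin_int hn μ hs m h01).sub (gmin_int hn μ hs m' h01')
  have hpp : 0 < gmin m p - gmin m' p := by
    have h1 : gmin m' p = 0 := le_antisymm (by simpa [hmj] using gmin_le m' p j) (gmin_nonneg _ _)
    haveI : Nonempty (Fin n) := ⟨⟨0, hn⟩⟩
    obtain ⟨k, hk⟩ := exists_eq_ciInf_of_finite (f := fun i => |m i - p| ^ 2)
    rw [h1, gmin, ← hk, sub_zero]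
    have : m k - p ≠ 0 := fun h => hpm ⟨k, by linarith⟩
    positivity
  have hopen : IsOpen ({x | 0 < gmin m x - gmin m' x} ∩ Set.Ioo 0 1) :=
    (isOpen_lt continuous_const (hcm.sub hcm')).inter isOpen_Ioo
  obtain ⟨ε, hε, hb⟩ := Metric.isOpen_iff.1 hopen p ⟨hpp, hp⟩
  have hU : μ {x | ¬ (gmin m x - gmin m' x = 0)} = 0 := ae_iff.1 hae
  rw [Real.ball_eq_Ioo] at hb
  have hend : Set.Icc (p - ε) (p + ε) ⊆ Set.Icc 0 1 := by
    rw [← closure_Ioo (by linarith : p - ε ≠ p + ε), ← closure_Ioo (zero_ne_one' ℝ)]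
    exact closure_mono (hb.trans inter_subset_right)
  have h1 := hend (left_mem_Icc.2 (by linarith))
  have h2 := hend (right_mem_Icc.2 (by linarith))
  have := hpos (p-ε) (p+ε) h1.1 (by linarith) h2.2
  have h3 : μ (Set.Ioo (p-ε) (p+ε)) ≤ 0 := by
    rw [← hU]
    refine measure_mono fun x hx => ?_
    have hx1 : 0 < gmin m x - gmin m' x := (hb hx).1
    exact hx1.ne'
  exact absurd this (not_lt.2 h3)

lemma vor_in {n : ℕ} (M : Fin n → ℝ) (hM : StrictMono M) (i : Fin n) (x : ℝ)
    (hx : x ∈ Set.Icc (somBnd M i.1) (somBnd M (i.1+1))) (k : Fin n) :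
    |M i - x| ^ 2 ≤ |M k - x| ^ 2 := by
  rw [sq_abs, sq_abs]
  rcases lt_trichotomy i k with h | h | h
  · have hk : i.1 + 1 < n := by have := k.2; have : i.1 < k.1 := h; omega
    have h1 := hx.2
    rw [bnd_succ M i.1 hk] at h1
    have h2 : M ⟨i.1+1, hk⟩ ≤ M k := hM.monotone (show i.1 + 1 ≤ k.1 from h)
    have h3 := hM h
    simp only [Fin.eta] at h1
    nlinarith
  · rw [h]
  · obtain ⟨i, hi⟩ := i
    rcases i with _ | i
    · exact absurd h (by simp [Fin.lt_def])
    · have h1 := hx.1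
      simp only at h1
      rw [bnd_succ M i hi] at h1
      have h2 : M k ≤ M ⟨i, by omega⟩ := hM.monotone (show k.1 ≤ i from Nat.lt_succ_iff.1 h)
      have h3 := hM h
      nlinarith

lemma vor_out {n : ℕ} (M : Fin n → ℝ) (hM : StrictMono M) (i : Fin n) (x : ℝ)
    (hx01 : x ∈ Set.Icc (0:ℝ) 1)
    (hx : x ∉ Set.Icc (somBnd M i.1) (somBnd M (i.1+1))) :
    ∃ k, k ≠ i ∧ |M k - x| ^ 2 ≤ |M i - x| ^ 2 := by
  simp only [sq_abs]
  obtain ⟨i, hi⟩ := i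
  rw [Set.mem_Icc, not_and_or, not_le, not_le] at hx
  rcases hx with h | h
  · rcases i with _ | i
    · simp only [bnd_zero] at h
      exact absurd hx01.1 (not_le.2 h)
    · simp only at h
      rw [bnd_succ M i hi] at h
      have h3 : M ⟨i, by omega⟩ < M ⟨i+1, hi⟩ := hM (by simp)
      refine ⟨⟨i, by omega⟩, by simp, ?_⟩
      nlinarith
  · rcases Nat.lt_or_ge (i+1) n with hk | hk
    · simp only at h
      rw [bnd_succ M i hk] at h
      have h3 : M ⟨i, by omega⟩ < M ⟨i+1, hk⟩ := hM (by simp)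
      refine ⟨⟨i+1, hk⟩, by simp, ?_⟩
      nlinarith
    · have : i + 1 = n := by omega
      simp only [this] at h
      rw [bnd_last (by omega)] at h
      exact absurd hx01.2 (not_le.2 h)

lemma min_crit {n : ℕ} (hn : 1 ≤ n) (μ : Measure ℝ) [IsProbabilityMeasure μ]
    (hs : ∀ᵐ x ∂μ, x ∈ Set.Icc (0:ℝ) 1)
    (hpos : ∀ a b : ℝ, 0 ≤ a → a < b → b ≤ 1 → 0 < μ (Set.Ioo a b))
    (M : Fin n → ℝ) (h01 : ∀ i, M i ∈ Set.Icc (0:ℝ) 1) (hM : StrictMono M)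
    (hmin : ∀ m' : Fin n → ℝ, (∀ i, m' i ∈ Set.Icc (0:ℝ) 1) →
        ∫ x, gmin M x ∂μ ≤ ∫ x, gmin m' x ∂μ) (i : Fin n) :
    M i ∈ Set.Ioo (0:ℝ) 1 ∧
      ∫ x in Set.Icc (somBnd M i.1) (somBnd M (i.1+1)), (M i - x) ∂μ = 0 := by
  set a := somBnd M i.1 with ha
  set b := somBnd M (i.1+1) with hb
  have hab : a < b := bnd_lt M hM h01 i
  have ha0 := (bnd_mem M h01 i.1).1
  have hb1 := (bnd_mem M h01 (i.1+1)).2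
  set C := Set.Icc a b with hC
  have hCm : MeasurableSet C := measurableSet_Icc
  have hw : 0 < μ.real C := by
    rw [measureReal_def, ENNReal.toReal_pos_iff]
    exact ⟨(hpos a b ha0 hab hb1).trans_le (measure_mono Ioo_subset_Icc_self), measure_lt_top _ _⟩
  have hcont : ∀ g : ℝ → ℝ, Continuous g → IntegrableOn g C μ := fun g hg =>
    hg.continuousOn.integrableOn_compact isCompact_Icc
  set w := μ.real C
  set S := ∫ x in C, x ∂μ with hS
  set c := S / w with hc
  have hcw : c * w = S := by rw [hc]; field_simp
  -- centroid strictly inside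
  have hlin : ∀ t : ℝ, ∫ x in C, (t - x) ∂μ = t * w - S := by
    intro t
    rw [integral_sub (hcont (fun _ => t) continuous_const) (hcont (fun x => x) continuous_id)]
    simp [hS, w, mul_comm]
  have hstrict : ∀ g : ℝ → ℝ, Continuous g → (∀ x ∈ C, 0 ≤ g x) → (∀ x ∈ Set.Ioo a b, 0 < g x) →
      0 < ∫ x in C, g x ∂μ := by
    intro g hg h0 h1
    rw [setIntegral_pos_iff_support_of_nonneg_ae]
    · refine (hpos a b ha0 hab hb1).trans_le (measure_mono fun x hx => ?_)
      exact ⟨(h1 x hx).ne', Ioo_subset_Icc_self hx⟩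
    · exact (ae_restrict_iff' hCm).2 (Eventually.of_forall h0)
    · exact hcont g hg
  have hca : a < c := by
    have := hstrict (fun x => x - a) (by fun_prop) (fun x hx => by linarith [hx.1])
      (fun x hx => by linarith [hx.1])
    have e : ∫ x in C, (x - a) ∂μ = - ∫ x in C, (a - x) ∂μ := by
      rw [← integral_neg]; congr 1; ext x; ring
    rw [e, hlin, ← hcw] at this
    nlinarith
  have hcb : c < b := by
    have := hstrict (fun x => b - x) (by fun_prop) (fun x hx => by linarith [hx.2])
      (fun x hx => by linarith [hx.2])
    rw [hlin, ← hcw] at this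
    nlinarith
  have hMc : M i = c := by
    set m' := Function.update M i c with hm'
    have h01' : ∀ i, m' i ∈ Set.Icc (0:ℝ) 1 := by
      intro k
      by_cases hk : k = i
      · rw [hk]; simp only [hm', Function.update_self]; exact ⟨by linarith, by linarith⟩
      · simpa [hm', hk] using h01 k
    have hpt : ∀ᵐ x ∂μ, gmin m' x ≤ gmin M x -
        C.indicator (fun x => (M i - c) * ((M i - x) + (c - x))) x := by
      filter_upwards [hs] with x hx
      by_cases hxC : x ∈ C
      · rw [Set.indicator_of_mem hxC]
        have h1 : |M i - x| ^ 2 ≤ gmin M x := le_gmin hn _ _ _ (vor_in M hM i x hxC)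
        have h2 : gmin m' x ≤ |c - x| ^ 2 := by simpa [hm'] using gmin_le m' x i
        rw [sq_abs] at h1 h2
        nlinarith
      · rw [Set.indicator_of_notMem hxC, sub_zero]
        obtain ⟨k, hk, hkx⟩ := vor_out M hM i x hx hxC
        apply le_gmin hn
        intro l
        by_cases hl : l = i
        · rw [hl]
          refine le_trans ?_ hkx
          simpa [hm', hk] using gmin_le m' x k
        · simpa [hm', hl] using gmin_le m' x l
    have hind : Integrable (C.indicator (fun x => (M i - c) * ((M i - x) + (c - x)))) μ :=
      (integrable_indicator_iff hCm).2 (hcont _ (by fun_prop))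
    have hI := integral_mono_ae (gmin_int hn μ hs m' h01') ((gmin_int hn μ hs M h01).sub hind) hpt
    have e1 : ∫ x, (gmin M - C.indicator (fun x => (M i - c) * ((M i - x) + (c - x)))) x ∂μ =
      ∫ x, gmin M x ∂μ - (M i - c) * ((M i * w - S) + (c * w - S)) := by
      rw [integral_sub' (gmin_int hn μ hs M h01) hind, integral_indicator hCm,
        integral_const_mul, integral_add (hcont _ (by fun_prop)) (hcont _ (by fun_prop)),
        hlin, hlin]
    have hI2 : ∫ x, gmin m' x ∂μ ≤ ∫ x, gmin M x ∂μ - (M i - c) * ((M i * w - S) + (c * w - S)) := by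
      rw [← e1]; exact hI
    have := hmin m' h01'
    rw [← hcw] at hI2
    have h3 : (M i - c)^2 * w ≤ 0 := by nlinarith
    have h4 : (M i - c)^2 ≤ 0 := by
      by_contra h
      push Not at h
      nlinarith [mul_pos h hw]
    nlinarith [pow_eq_zero_iff (two_ne_zero) |>.1 (le_antisymm h4 (sq_nonneg _))]
  refine ⟨by rw [hMc]; exact ⟨by linarith, by linarith⟩, ?_⟩
  rw [hlin, hMc, hcw, sub_self]

/-- In dimension 1, under `H_μ`, the gradient of the
distortion has a unique zero `m★_n` in `F_n^+`, and this point minimizes the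
distortion over `F_n^+`. -/
theorem distortion_unique_zero_dim1 {n : ℕ} (hn : 1 ≤ n)
    (μ : Measure ℝ) [IsProbabilityMeasure μ] (f : ℝ → ℝ)
    (hdens : μ = volume.withDensity fun x => ENNReal.ofReal (f x))
    (hsupp : ∀ x, x ∉ Set.Icc (0 : ℝ) 1 → f x = 0)
    (hHμ : Hmu f) :
    ∃ mstar : Fin n → ℝ,
      (mstar ∈ Fplus n ∧ ∀ i, gradV f mstar i = 0) ∧
      (∀ m ∈ Fplus n, (∀ i, gradV f m i = 0) → m = mstar) ∧
      ∀ m ∈ Fplus n, distortion1 μ mstar ≤ distortion1 μ m := by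
  obtain ⟨fpos, hor⟩ := hHμ
  have hconc : ConcaveOn ℝ (Set.Ioo (0 : ℝ) 1) (fun x => Real.log (f x)) := by
    rcases hor with h | h
    · exact h.concaveOn
    · exact h.1
  have LC := aux_LC f fpos hconc
  have hcont : ContinuousOn f (Set.Ioo 0 1) := by
    have h1 := hconc.continuousOn isOpen_Ioo
    have h2 : ContinuousOn (fun x => Real.exp (Real.log (f x))) (Set.Ioo 0 1) :=
      Real.continuous_exp.comp_continuousOn h1
    exact h2.congr fun x hx => (Real.exp_log (fpos x hx)).symm
  have hae : (Set.Ioo (0:ℝ) 1).indicator f =ᵐ[volume] f := by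
    have : ∀ᵐ x : ℝ, x ∉ ({0, 1} : Set ℝ) :=
      measure_eq_zero_iff_ae_notMem.1 ((Set.toFinite _).measure_zero _)
    filter_upwards [this] with x hx
    simp only [Set.mem_insert_iff, Set.mem_singleton_iff, not_or] at hx
    by_cases h : x ∈ Set.Ioo (0:ℝ) 1
    · rw [Set.indicator_of_mem h]
    · rw [Set.indicator_of_notMem h, hsupp x]
      intro h'
      exact h ⟨lt_of_le_of_ne h'.1 (Ne.symm hx.1), lt_of_le_of_ne h'.2 hx.2⟩
  have hmeas : AEMeasurable f volume :=
    ((aemeasurable_indicator_iff measurableSet_Ioo).2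
      (hcont.aemeasurable measurableSet_Ioo)).congr hae
  have hnn : 0 ≤ᵐ[volume] f := by
    filter_upwards [hae] with x hx
    rw [← hx]
    exact Set.indicator_nonneg (fun y hy => (fpos y hy).le) x
  have hmass : ∫⁻ x, ENNReal.ofReal (f x) = 1 := by
    have : μ Set.univ = 1 := measure_univ
    rwa [hdens, withDensity_apply _ MeasurableSet.univ, Measure.restrict_univ] at this
  have hf : Integrable f :=
    (lintegral_ofReal_ne_top_iff_integrable hmeas.aestronglyMeasurable hnn).1 (by simp [hmass])
  have hs : ∀ᵐ x ∂μ, x ∈ Set.Icc (0:ℝ) 1 := by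
    rw [ae_iff, hdens]
    change (volume.withDensity fun x => ENNReal.ofReal (f x)) (Set.Icc (0:ℝ) 1)ᶜ = 0
    rw [withDensity_apply _ measurableSet_Icc.compl]
    rw [setLIntegral_congr_fun (g := fun _ => 0) measurableSet_Icc.compl]
    · simp
    · intro x hx
      simp [hsupp x hx]
  have hpos : ∀ a b : ℝ, 0 ≤ a → a < b → b ≤ 1 → 0 < μ (Set.Ioo a b) := by
    intro a b ha hab hb
    rw [pos_iff_ne_zero, hdens, Ne, withDensity_apply_eq_zero' hmeas.ennreal_ofReal]
    · have hsub : Set.Ioo a b ⊆ {x | ENNReal.ofReal (f x) ≠ 0} ∩ Set.Ioo a b := by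
        intro x hx
        have := fpos x ⟨by linarith [hx.1], by linarith [hx.2]⟩
        exact ⟨by simpa using this, hx⟩
      refine (lt_of_lt_of_le ?_ (measure_mono hsub)).ne'
      simpa using hab
  have hgrad : ∀ (m : Fin n → ℝ) (i : Fin n), gradV f m i =
      ∫ x in Set.Icc (somBnd m i.1) (somBnd m (i.1+1)), (m i - x) ∂μ := by
    intro m i
    rw [hdens, setIntegral_withDensity_eq_setIntegral_toReal_smul₀ hmeas.ennreal_ofReal.restrict
      (by simp) _ measurableSet_Icc, gradV]
    refine integral_congr_ae (ae_restrict_of_ae ?_)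
    filter_upwards [hnn] with x hx
    rw [ENNReal.toReal_ofReal hx, smul_eq_mul, mul_comm]
  obtain ⟨m, h01, hmin⟩ := exists_min hn μ hs
  have hinj := min_inj hn μ hs hpos m h01 hmin
  set M := m ∘ Tuple.sort m with hMdef
  have hM : StrictMono M :=
    (Tuple.monotone_sort m).strictMono_of_injective (hinj.comp (Tuple.sort m).injective)
  have hM01 : ∀ i, M i ∈ Set.Icc (0:ℝ) 1 := fun i => h01 _
  have hgM : gmin M = gmin m := by
    ext x
    exact (Tuple.sort m).iInf_comp (g := fun i => |m i - x| ^ 2)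
  have hminM : ∀ m' : Fin n → ℝ, (∀ i, m' i ∈ Set.Icc (0:ℝ) 1) →
        ∫ x, gmin M x ∂μ ≤ ∫ x, gmin m' x ∂μ := by rw [hgM]; exact hmin
  have hcrit := min_crit hn μ hs hpos M hM01 hM hminM
  have hMF : M ∈ Fplus n := ⟨hM, fun i => (hcrit i).1⟩
  have hMz : ∀ i, gradV f M i = 0 := fun i => by rw [hgrad]; exact (hcrit i).2
  refine ⟨M, ⟨hMF, hMz⟩, ?_, ?_⟩
  · intro m' hm' hz'
    rcases le_total (m' ⟨0, hn⟩) (M ⟨0, hn⟩) with h | h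
    · exact uniq_aux hn f hf fpos LC m' M hm' hMF hz' hMz h
    · exact (uniq_aux hn f hf fpos LC M m' hMF hm' hMz hz' h).symm
  · intro m' hm'
    have := hminM m' (fun i => Ioo_subset_Icc_self (hm'.2 i))
    unfold distortion1
    unfold gmin at this
    linarith

end
end

section
/- Let μ be an atomless probability measure on ℝ^d with compact support (so in particular its support is infinite). Then for every n, any point m★_n ∈ (ℝ^d)^n at which the distortion V_n attains its global minimum over (ℝ^d)^n has pairwise distinct components: m★_{n,i} ≠ m★_{n,j} whenever i ≠ j. -/
open MeasureTheory Set Filter Topology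
open scoped Classical ENNReal

noncomputable section

/-- The distortion `V_n(m) = (1/2) ∫ min_i ‖m_i - x‖² dμ(x)`. -/
def distortion {d n : ℕ} (μ : Measure (EuclideanSpace ℝ (Fin d)))
    (m : Fin n → EuclideanSpace ℝ (Fin d)) : ℝ :=
  (1 / 2) * ∫ x, (⨅ i, ‖m i - x‖ ^ 2) ∂μ

theorem integrable_inf_aux {d n : ℕ} (μ : Measure (EuclideanSpace ℝ (Fin d)))
    [IsProbabilityMeasure μ] (hcomp : ∃ K, IsCompact K ∧ μ Kᶜ = 0)
    (m : Fin n → EuclideanSpace ℝ (Fin d)) (i : Fin n) :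
    Integrable (fun x => ⨅ i, ‖m i - x‖ ^ 2) μ := by
  obtain ⟨K, hK, hK0⟩ := hcomp
  have hr : μ.restrict K = μ := Measure.restrict_eq_self_of_ae_mem (by
    rw [ae_iff]; exact hK0)
  have h1 : Integrable (fun x => ‖m i - x‖ ^ 2) μ := by
    have : IntegrableOn (fun x => ‖m i - x‖ ^ 2) K μ :=
      ContinuousOn.integrableOn_compact hK (by fun_prop)
    rwa [IntegrableOn, hr] at this
  have hm : Measurable (fun x => ⨅ i, ‖m i - x‖ ^ 2) :=
    Measurable.iInf (fun i => by fun_prop)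
  refine h1.mono' hm.aestronglyMeasurable (ae_of_all _ fun x => ?_)
  rw [Real.norm_of_nonneg (Real.iInf_nonneg fun i => by positivity)]
  exact ciInf_le (Set.finite_range _).bddBelow i

/-- For an atomless, compactly supported probability measure
`μ`, every global minimizer of the distortion has pairwise distinct
components. -/
theorem distortion_minimizer_pairwise_distinct {d n : ℕ} (hd : 1 ≤ d)
    (μ : Measure (EuclideanSpace ℝ (Fin d))) [IsProbabilityMeasure μ]
    (hatomless : ∀ x, μ {x} = 0)
    (hcomp : ∃ K, IsCompact K ∧ μ Kᶜ = 0)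
    (mstar : Fin n → EuclideanSpace ℝ (Fin d))
    (hmin : ∀ m : Fin n → EuclideanSpace ℝ (Fin d),
      distortion μ mstar ≤ distortion μ m) :
    ∀ i j : Fin n, i ≠ j → mstar i ≠ mstar j := by
  intro i j hij heq
  have hfin : μ (Set.range mstar)ᶜ ≠ 0 := by
    have h0 : μ (Set.range mstar) = 0 := by
      rw [← Set.iUnion_singleton_eq_range, measure_iUnion_null_iff]
      exact fun k => hatomless _
    rw [prob_compl_eq_one_sub (Set.finite_range _).measurableSet, h0]
    simp
  obtain ⟨y, hy, hpos⟩ := exists_mem_forall_mem_nhdsWithin_pos_measure hfin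
  have hyk : ∀ k, mstar k ≠ y := fun k h => hy ⟨k, h⟩
  set m' := Function.update mstar j y with hm'
  set U : Set (EuclideanSpace ℝ (Fin d)) := ⋂ k, {x | ‖y - x‖ < ‖mstar k - x‖} with hU
  have hUo : IsOpen U := isOpen_iInter_of_finite fun k =>
    isOpen_lt (by fun_prop) (by fun_prop)
  have hyU : y ∈ U := by
    simp only [hU, Set.mem_iInter, Set.mem_setOf_eq, sub_self, norm_zero, norm_pos_iff]
    exact fun k => sub_ne_zero.2 (hyk k)
  have hUpos : 0 < μ U := hpos U (mem_nhdsWithin_of_mem_nhds (hUo.mem_nhds hyU))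
  have i1 := integrable_inf_aux μ hcomp mstar i
  have i2 := integrable_inf_aux μ hcomp m' i
  haveI : Nonempty (Fin n) := ⟨i⟩
  have bdd : ∀ (m : Fin n → EuclideanSpace ℝ (Fin d)) x,
      BddBelow (Set.range fun k => ‖m k - x‖ ^ 2) := fun m x => (Set.finite_range _).bddBelow
  have hle : ∀ x, (⨅ k, ‖m' k - x‖ ^ 2) ≤ ⨅ k, ‖mstar k - x‖ ^ 2 := by
    intro x
    refine le_ciInf fun k => ?_
    by_cases hk : k = j
    · have := ciInf_le (bdd m' x) i
      rw [hk, ← heq]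
      simpa [hm', Function.update_of_ne hij] using this
    · have := ciInf_le (bdd m' x) k
      simpa [hm', Function.update_of_ne hk] using this
  have hlt : ∀ x ∈ U, (⨅ k, ‖m' k - x‖ ^ 2) < ⨅ k, ‖mstar k - x‖ ^ 2 := by
    intro x hx
    obtain ⟨k, hk⟩ := exists_eq_ciInf_of_finite (f := fun k => ‖mstar k - x‖ ^ 2)
    rw [← hk]
    have h1 : (⨅ k, ‖m' k - x‖ ^ 2) ≤ ‖y - x‖ ^ 2 := by
      have := ciInf_le (bdd m' x) j
      simpa [hm'] using this
    have h2 : ‖y - x‖ < ‖mstar k - x‖ := Set.mem_iInter.1 hx k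
    exact h1.trans_lt (pow_lt_pow_left₀ h2 (norm_nonneg _) two_ne_zero)
  have hV := hmin m'
  unfold distortion at hV
  have hI : ∫ x, ((⨅ k, ‖mstar k - x‖ ^ 2) - ⨅ k, ‖m' k - x‖ ^ 2) ∂μ ≤ 0 := by
    rw [integral_sub i1 i2]; linarith
  have hp : 0 < ∫ x, ((⨅ k, ‖mstar k - x‖ ^ 2) - ⨅ k, ‖m' k - x‖ ^ 2) ∂μ := by
    rw [integral_pos_iff_support_of_nonneg (fun x => sub_nonneg.2 (hle x)) (i1.sub i2)]
    refine hUpos.trans_le (measure_mono fun x hx => ?_)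
    exact (sub_pos.2 (hlt x hx)).ne'
  linarith

end
end

section
/- Let μ be a probability measure on ℝ^d with compact support and density f. For each n, let m★_n = (m★_{n,1},…,m★_{n,n}) ∈ (ℝ^d)^n be a global minimizer of the distortion V_n, and define the weighted empirical measure μ_n = Σ_{i=1}^n μ(C_i(m★_n)) · δ_{m★_{n,i}}, where the Voronoi cells C_i(m★_n) are made into a partition by assigning boundary points to the smallest winning index. Then μ_n converges weakly (in distribution) to μ as n → ∞. -/
open MeasureTheory Set Filter Topology
open scoped Classical ENNReal

noncomputable section

/-- The tie-broken Voronoi cell: `x ∈ cellP m i` iff `i` is the smallest index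
minimizing `‖x - m j‖`; these cells partition `ℝ^d`. -/
def cellP {d n : ℕ} (m : Fin n → EuclideanSpace ℝ (Fin d)) (i : Fin n) :
    Set (EuclideanSpace ℝ (Fin d)) :=
  {x | (∀ j, ‖x - m i‖ ≤ ‖x - m j‖) ∧ ∀ j, j < i → ∃ k, ‖x - m k‖ < ‖x - m j‖}

/-- The weighted empirical measure `μ_n = Σ_i μ(C_i(m)) δ_{m_i}`. -/
def weightedEmpirical {d n : ℕ} (μ : Measure (EuclideanSpace ℝ (Fin d)))
    (m : Fin n → EuclideanSpace ℝ (Fin d)) :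
    Measure (EuclideanSpace ℝ (Fin d)) :=
  ∑ i : Fin n, μ (cellP m i) • Measure.dirac (m i)

theorem measurableSet_cellP {d n : ℕ} (m : Fin n → EuclideanSpace ℝ (Fin d)) (i : Fin n) :
    MeasurableSet (cellP m i) := by
  have : cellP m i = (⋂ j, {x | ‖x - m i‖ ≤ ‖x - m j‖}) ∩
      ⋂ j, ⋂ (_ : j < i), ⋃ k, {x | ‖x - m k‖ < ‖x - m j‖} := by
    ext x; simp [cellP]
  rw [this]
  refine MeasurableSet.inter (MeasurableSet.iInter fun j => ?_)
    (MeasurableSet.iInter fun j => MeasurableSet.iInter fun _ => MeasurableSet.iUnion fun k => ?_)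
  · exact measurableSet_le (by fun_prop) (by fun_prop)
  · exact measurableSet_lt (by fun_prop) (by fun_prop)

theorem existsUnique_cellP {d n : ℕ} (hn : 0 < n) (m : Fin n → EuclideanSpace ℝ (Fin d))
    (x : EuclideanSpace ℝ (Fin d)) : ∃ i, x ∈ cellP m i ∧ ∀ j, x ∈ cellP m j → j = i := by
  haveI : Nonempty (Fin n) := ⟨⟨0, hn⟩⟩
  obtain ⟨i0, hi0⟩ := Finite.exists_min (fun i => ‖x - m i‖)
  let s : Finset (Fin n) := Finset.univ.filter fun i => ∀ j, ‖x - m i‖ ≤ ‖x - m j‖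
  have hs : s.Nonempty := ⟨i0, by simpa [s] using hi0⟩
  have hmem := s.min'_mem hs
  have key : x ∈ cellP m (s.min' hs) := by
    refine ⟨by simpa [s] using hmem, fun j hj => ?_⟩
    by_contra! hc
    have : j ∈ s := by simpa [s] using hc
    exact absurd (s.min'_le j this) (not_le.2 hj)
  refine ⟨_, key, fun j hj => ?_⟩
  rcases lt_trichotomy j (s.min' hs) with h | h | h
  · obtain ⟨k, hk⟩ := key.2 j h
    exact absurd (hj.1 k) (not_le.2 hk)
  · exact h
  · obtain ⟨k, hk⟩ := hj.2 _ h
    exact absurd (key.1 k) (not_le.2 hk)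

theorem bddBelow_sq {d n : ℕ} (m : Fin n → EuclideanSpace ℝ (Fin d))
    (x : EuclideanSpace ℝ (Fin d)) : BddBelow (Set.range fun i => ‖m i - x‖ ^ 2) :=
  ⟨0, by rintro _ ⟨i, rfl⟩; positivity⟩

theorem iInf_sq_nonneg {d n : ℕ} (m : Fin n → EuclideanSpace ℝ (Fin d))
    (x : EuclideanSpace ℝ (Fin d)) : 0 ≤ ⨅ i, ‖m i - x‖ ^ 2 :=
  Real.iInf_nonneg fun i => by positivity

theorem iInf_eq_of_cellP {d n : ℕ} (m : Fin n → EuclideanSpace ℝ (Fin d))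
    (x : EuclideanSpace ℝ (Fin d)) (i : Fin n) (hi : x ∈ cellP m i) :
    ⨅ i, ‖m i - x‖ ^ 2 = ‖m i - x‖ ^ 2 := by
  haveI : Nonempty (Fin n) := ⟨i⟩
  refine le_antisymm (ciInf_le (bddBelow_sq m x) i) (le_ciInf fun j => ?_)
  have := hi.1 j
  rw [norm_sub_rev, norm_sub_rev x] at this
  gcongr

theorem integrable_iInf {d n : ℕ} (hn : 0 < n) (μ : Measure (EuclideanSpace ℝ (Fin d)))
    [IsProbabilityMeasure μ] (hcomp : ∃ K, IsCompact K ∧ μ Kᶜ = 0)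
    (m : Fin n → EuclideanSpace ℝ (Fin d)) :
    Integrable (fun x => ⨅ i, ‖m i - x‖ ^ 2) μ := by
  obtain ⟨K, hK, hK0⟩ := hcomp
  have hr : μ.restrict K = μ := Measure.restrict_eq_self_of_ae_mem (by
    rw [ae_iff]; exact hK0)
  have h1 : Integrable (fun x => ‖m ⟨0, hn⟩ - x‖ ^ 2) μ := by
    rw [← hr]
    exact ContinuousOn.integrableOn_compact hK (by fun_prop)
  refine h1.mono' (Measurable.iInf fun i => by fun_prop).aestronglyMeasurable ?_
  refine Eventually.of_forall fun x => ?_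
  rw [Real.norm_of_nonneg (iInf_sq_nonneg m x)]
  exact ciInf_le (bddBelow_sq m x) _

theorem distortion_small {d : ℕ} (μ : Measure (EuclideanSpace ℝ (Fin d)))
    [IsProbabilityMeasure μ] (hcomp : ∃ K, IsCompact K ∧ μ Kᶜ = 0) (ε : ℝ) (hε : 0 < ε) :
    ∃ N : ℕ, ∀ n, N ≤ n → ∃ m : Fin n → EuclideanSpace ℝ (Fin d),
      ∫ x, (⨅ i, ‖m i - x‖ ^ 2) ∂μ ≤ ε ^ 2 := by
  have hcomp' := hcomp
  obtain ⟨K, hK, hK0⟩ := hcomp'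
  obtain ⟨t, -, htf, hcov⟩ := hK.finite_cover_balls hε
  let s := htf.toFinset
  refine ⟨s.card + 1, fun n hn => ?_⟩
  let m : Fin n → EuclideanSpace ℝ (Fin d) := fun i =>
    if h : (i : ℕ) < s.card then (s.equivFin.symm ⟨i, h⟩ : EuclideanSpace ℝ (Fin d)) else 0
  refine ⟨m, ?_⟩
  have hK' : ∀ᵐ x ∂μ, x ∈ K := by rw [ae_iff]; exact hK0
  have : ∫ x, (⨅ i, ‖m i - x‖ ^ 2) ∂μ ≤ ∫ x, ε ^ 2 ∂μ := by
    refine integral_mono_ae (integrable_iInf (by omega) μ hcomp m) (integrable_const _) ?_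
    filter_upwards [hK'] with x hx
    obtain ⟨y, hy, hxy⟩ := by simpa using hcov hx
    have hys : y ∈ s := by simpa [s] using hy
    have hlt := (s.equivFin ⟨y, hys⟩).2
    have hm : m ⟨s.equivFin ⟨y, hys⟩, by omega⟩ = y := by
      simp [m]
    refine (ciInf_le (bddBelow_sq m x) ⟨s.equivFin ⟨y, hys⟩, by omega⟩).trans ?_
    rw [hm, ← dist_eq_norm, dist_comm]
    gcongr
  simpa using this

theorem integral_weightedEmpirical {d n : ℕ} (μ : Measure (EuclideanSpace ℝ (Fin d)))
    [IsProbabilityMeasure μ] (m : Fin n → EuclideanSpace ℝ (Fin d))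
    (g : BoundedContinuousFunction (EuclideanSpace ℝ (Fin d)) ℝ) :
    ∫ x, g x ∂(weightedEmpirical μ m) =
      ∫ x, ∑ i, (cellP m i).indicator (fun _ => g (m i)) x ∂μ := by
  unfold weightedEmpirical
  rw [integral_finsetSum_measure, integral_finsetSum]
  · refine Finset.sum_congr rfl fun i _ => ?_
    rw [integral_smul_measure, integral_dirac, integral_indicator_const _ (measurableSet_cellP m i)]
    rfl
  · intro i _
    exact (integrable_const _).indicator (measurableSet_cellP m i)
  · intro i _
    exact (g.integrable _).smul_measure (measure_ne_top _ _)

/-- The weighted empirical measures associated with global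
minimizers of the distortion converge weakly to `μ` as `n → ∞`. -/
theorem weightedEmpirical_tendsto_weakly {d : ℕ} (hd : 1 ≤ d)
    (μ : Measure (EuclideanSpace ℝ (Fin d))) [IsProbabilityMeasure μ]
    (f : EuclideanSpace ℝ (Fin d) → ℝ) (hf0 : ∀ x, 0 ≤ f x)
    (hdens : μ = volume.withDensity fun x => ENNReal.ofReal (f x))
    (hcomp : ∃ K, IsCompact K ∧ μ Kᶜ = 0)
    (mstar : (n : ℕ) → Fin n → EuclideanSpace ℝ (Fin d))
    (hmin : ∀ n : ℕ, ∀ m : Fin n → EuclideanSpace ℝ (Fin d),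
      distortion μ (mstar n) ≤ distortion μ m) :
    ∀ g : BoundedContinuousFunction (EuclideanSpace ℝ (Fin d)) ℝ,
      Tendsto (fun n : ℕ => ∫ x, g x ∂(weightedEmpirical μ (mstar n))) atTop
        (nhds (∫ x, g x ∂μ)) := by
  intro g
  have hI : Tendsto (fun n => ∫ x, (⨅ i, ‖mstar n i - x‖ ^ 2) ∂μ) atTop (𝓝 0) := by
    rw [Metric.tendsto_atTop]
    intro ε hε
    obtain ⟨N, hN⟩ := distortion_small μ hcomp (Real.sqrt (ε / 2)) (by positivity)
    refine ⟨N, fun n hn => ?_⟩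
    obtain ⟨m, hm⟩ := hN n hn
    have h1 := hmin n m
    unfold distortion at h1
    rw [Real.sq_sqrt (by positivity)] at hm
    rw [Real.dist_eq, sub_zero, abs_of_nonneg (integral_nonneg fun x => iInf_sq_nonneg _ x)]
    linarith
  have hM : TendstoInMeasure μ (fun n x => ⨅ i, ‖mstar (n + 1) i - x‖ ^ 2) atTop
      (fun _ => (0 : ℝ)) := by
    refine tendstoInMeasure_of_tendsto_eLpNorm (p := 1) one_ne_zero
      (fun n => (integrable_iInf n.succ_pos μ hcomp _).aestronglyMeasurable)
      aestronglyMeasurable_const ?_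
    have : ∀ n, eLpNorm ((fun x => ⨅ i, ‖mstar (n + 1) i - x‖ ^ 2) - fun _ => (0 : ℝ)) 1 μ =
        ENNReal.ofReal (∫ x, (⨅ i, ‖mstar (n + 1) i - x‖ ^ 2) ∂μ) := by
      intro n
      rw [ofReal_integral_eq_lintegral_ofReal (integrable_iInf n.succ_pos μ hcomp _)
        (Eventually.of_forall fun x => iInf_sq_nonneg _ x), eLpNorm_one_eq_lintegral_enorm]
      refine lintegral_congr fun x => ?_
      simp only [Pi.sub_apply, sub_zero]
      exact Real.enorm_of_nonneg (iInf_sq_nonneg _ x)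
    simp_rw [this]
    simpa using ENNReal.tendsto_ofReal (hI.comp (tendsto_add_atTop_nat 1))
  rw [← tendsto_add_atTop_iff_nat 1]
  refine tendsto_of_subseq_tendsto fun ns hns => ?_
  have hM2 : TendstoInMeasure μ (fun k x => ⨅ i, ‖mstar (ns k + 1) i - x‖ ^ 2) atTop
      (fun _ => (0 : ℝ)) := fun ε hε => (hM ε hε).comp hns
  obtain ⟨ms, -, hms⟩ := hM2.exists_seq_tendsto_ae
  refine ⟨ms, ?_⟩
  simp_rw [integral_weightedEmpirical]
  refine tendsto_integral_of_dominated_convergence (fun _ => ‖g‖) ?_ (integrable_const _) ?_ ?_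
  · intro k
    exact (Finset.measurable_sum _ fun i _ =>
      measurable_const.indicator (measurableSet_cellP _ i)).aestronglyMeasurable
  · intro k
    refine Eventually.of_forall fun x => ?_
    obtain ⟨i, hi, hu⟩ := existsUnique_cellP (Nat.succ_pos _) (mstar (ns (ms k) + 1)) x
    rw [Finset.sum_eq_single i (fun j _ hj => indicator_of_notMem (fun h => hj (hu j h)) _)
      (by simp), indicator_of_mem hi]
    exact g.norm_coe_le_norm _
  · filter_upwards [hms] with x hx
    choose i hi hu using fun k => existsUnique_cellP (Nat.succ_pos _) (mstar (ns (ms k) + 1)) x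
    have e : ∀ k, ∑ j, (cellP (mstar (ns (ms k) + 1)) j).indicator
        (fun _ => g (mstar (ns (ms k) + 1) j)) x = g (mstar (ns (ms k) + 1) (i k)) := by
      intro k
      rw [Finset.sum_eq_single (i k)
        (fun j _ hj => indicator_of_notMem (fun h => hj (hu k j h)) _)
        (by simp), indicator_of_mem (hi k)]
    simp_rw [e]
    refine (g.continuous.tendsto x).comp ?_
    rw [tendsto_iff_norm_sub_tendsto_zero]
    have h2 : ∀ k, ⨅ j, ‖mstar (ns (ms k) + 1) j - x‖ ^ 2 =
        ‖mstar (ns (ms k) + 1) (i k) - x‖ ^ 2 := fun k => iInf_eq_of_cellP _ x _ (hi k)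
    simp_rw [h2] at hx
    have := hx.sqrt
    simpa [Real.sqrt_sq] using this

end
end
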